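/- arXiv:math/0702153 — 2 statements merged into one kernel-verified Lean document; each statement's English description precedes it below -/
import Mathlib

section
/- Let N ≥ 1, T > 0, and let constants L₁, N₁ ≥ 0 and 0 < δ ≤ M₁ be given. Let c : ℝ^N × [0,T] → ℝ be Borel measurable, continuously differentiable in x for almost every t, with |c(x,t) − c(y,t)| ≤ L₁|x − y|, |D_x c(x,t) − D_x c(y,t)| ≤ N₁|x − y| and δ ≤ c(x,t) ≤ M₁ for all x, y ∈ ℝ^N and almost every t ∈ [0,T]. Let y₀, p₀ : [0,T] → ℝ^N be absolutely continuous with p₀(t) ≠ 0 for all t, |p₀(T)| = 1, ẏ₀(t) = c(y₀(t), t) p₀(t)/|p₀(t)| and ṗ₀(t) = −D_x c(y₀(t), t) |p₀(t)| for almost every t, and let P : [0,T] → M_N(ℝ) be absolutely continuous with P(T) = Id and Ṗ(t) = (1/|p₀(t)|) p₀(t) (D_x c(y₀(t), t))ᵀ P(t) for almost every t. Set θ₀ = p₀(T). Then there exists γ > 0, depending only on T, L₁, N₁, M₁ and δ, such that for every θ in the closed unit ball of ℝ^N, the function y_θ(t) = y₀(t) − γ t P(t)(θ₀ − θ) satisfies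 |ẏ_θ(t)| ≤ c(y_θ(t), t) for almost every t ∈ [0,T]. -/
open MeasureTheory

namespace Stmt13Aux

open Set Filter Topology

/-- From the integral equation: Lipschitz regularity and a.e. differentiability. -/
lemma integral_eq_reg {F : Type*} [NormedAddCommGroup F] [NormedSpace ℝ F] [CompleteSpace F]
    {T C : ℝ} (hT : 0 < T) (hC : 0 ≤ C) {u f : ℝ → F}
    (hm : AEStronglyMeasurable f (volume.restrict (Icc 0 T)))
    (hb : ∀ᵐ t ∂(volume.restrict (Icc 0 T)), ‖f t‖ ≤ C)
    (hu : ∀ t ∈ Icc (0:ℝ) T, u t = u 0 + ∫ s in (0:ℝ)..t, f s) :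
    (∀ s ∈ Icc (0:ℝ) T, ∀ t ∈ Icc (0:ℝ) T, ‖u s - u t‖ ≤ C * |s - t|) ∧
    ∀ᵐ t ∂(volume.restrict (Icc 0 T)), HasDerivAt u (f t) t := by
  have hint : IntegrableOn f (Icc 0 T) volume :=
    Integrable.of_bound hm C hb
  have hii : IntervalIntegrable f volume 0 T := by
    rw [intervalIntegrable_iff_integrableOn_Icc_of_le hT.le]; exact hint
  have hsub : ∀ t ∈ Icc (0:ℝ) T, IntervalIntegrable f volume 0 t := by
    intro t ht
    rw [intervalIntegrable_iff_integrableOn_Icc_of_le ht.1]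
    exact hint.mono_set (Icc_subset_Icc le_rfl ht.2)
  have hb' := (ae_restrict_iff' measurableSet_Icc).1 hb
  constructor
  · intro s hs t ht
    rw [hu s hs, hu t ht, add_sub_add_left_eq_sub,
      intervalIntegral.integral_interval_sub_left (hsub s hs) (hsub t ht)]
    apply intervalIntegral.norm_integral_le_of_norm_le_const_ae
    filter_upwards [hb'] with x hx hxm
    apply hx
    have h1 := uIoc_subset_uIcc hxm
    exact (uIcc_subset_Icc ht hs) h1
  · rw [ae_restrict_iff' measurableSet_Icc]
    have h₁ : ∀ᵐ x : ℝ, x ≠ 0 := by simp [ae_iff, measure_singleton]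
    have h₂ : ∀ᵐ x : ℝ, x ≠ T := by simp [ae_iff, measure_singleton]
    filter_upwards [hii.ae_hasDerivAt_integral, h₁, h₂] with x hx h1 h2 hxI
    have hd := hx (by rwa [uIcc_of_le hT.le]) 0 (by simp)
    have hd' := hd.const_add (u 0)
    refine hd'.congr_of_eventuallyEq ?_
    have : Icc (0:ℝ) T ∈ 𝓝 x :=
      Icc_mem_nhds (lt_of_le_of_ne hxI.1 (Ne.symm h1)) (lt_of_le_of_ne hxI.2 h2)
    filter_upwards [this] with y hy using hu y hy

lemma inner_ac {E : Type*} [NormedAddCommGroup E] [InnerProductSpace ℝ E]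
    {a b A B : ℝ} (hA : 0 ≤ A) (hB : 0 ≤ B) {u v : ℝ → E}
    (hu : ∀ s ∈ uIcc a b, ∀ t ∈ uIcc a b, ‖u s - u t‖ ≤ A * |s - t|)
    (hv : ∀ s ∈ uIcc a b, ∀ t ∈ uIcc a b, ‖v s - v t‖ ≤ B * |s - t|) :
    AbsolutelyContinuousOnInterval (fun t => inner ℝ (u t) (v t)) a b := by
  have hl : ∀ (w : ℝ → E) (K : ℝ), 0 ≤ K →
      (∀ s ∈ uIcc a b, ∀ t ∈ uIcc a b, ‖w s - w t‖ ≤ K * |s - t|) →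
      ∃ M, 0 ≤ M ∧ ∀ s ∈ uIcc a b, ‖w s‖ ≤ M := by
    intro w K hK h
    refine ⟨‖w a‖ + K * |b - a|, by positivity, fun s hs => ?_⟩
    have h1 := h s hs a left_mem_uIcc
    have h2 : ‖w s‖ ≤ ‖w a‖ + ‖w s - w a‖ := by
      have := norm_add_le (w a) (w s - w a); simpa using this
    have h3 : |s - a| ≤ |b - a| := abs_sub_left_of_mem_uIcc hs
    have := mul_le_mul_of_nonneg_left h3 hK
    linarith
  obtain ⟨MU, hMU0, hMU⟩ := hl u A hA hu
  obtain ⟨MV, hMV0, hMV⟩ := hl v B hB hv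
  have : LipschitzOnWith (Real.toNNReal (A * MV + MU * B))
      (fun t => inner ℝ (u t) (v t)) (uIcc a b) := by
    apply LipschitzOnWith.of_dist_le_mul
    intro s hs t ht
    rw [Real.coe_toNNReal _ (by positivity), Real.dist_eq, Real.dist_eq]
    have e : inner ℝ (u s) (v s) - inner ℝ (u t) (v t)
        = inner ℝ (u s - u t) (v s) + inner ℝ (u t) (v s - v t) := by
      rw [inner_sub_left, inner_sub_right]; ring
    rw [e]
    refine (abs_add_le _ _).trans ?_
    have h1 := abs_real_inner_le_norm (u s - u t) (v s)
    have h2 := abs_real_inner_le_norm (u t) (v s - v t)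
    have h3 : ‖u s - u t‖ * ‖v s‖ ≤ (A * |s - t|) * MV :=
      mul_le_mul (hu s hs t ht) (hMV s hs) (norm_nonneg _) (by positivity)
    have h4 : ‖u t‖ * ‖v s - v t‖ ≤ MU * (B * |s - t|) :=
      mul_le_mul (hMU t ht) (hv s hs t ht) (norm_nonneg _) (by positivity)
    nlinarith
  exact this.absolutelyContinuousOnInterval

/-- Backward Gronwall estimate. -/
lemma gronwall_back {E : Type*} [NormedAddCommGroup E] [InnerProductSpace ℝ E]
    {T L A : ℝ} (hL : 0 ≤ L) (hA : 0 ≤ A) {u u' : ℝ → E}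
    (hu : ∀ s ∈ Icc (0:ℝ) T, ∀ t ∈ Icc (0:ℝ) T, ‖u s - u t‖ ≤ A * |s - t|)
    (hd : ∀ᵐ t ∂(volume.restrict (Icc 0 T)), HasDerivAt u (u' t) t)
    (hb : ∀ᵐ t ∂(volume.restrict (Icc 0 T)), ‖u' t‖ ≤ L * ‖u t‖) :
    ∀ t ∈ Icc (0:ℝ) T, ‖u t‖ ≤ Real.exp (L * T) * ‖u T‖ := by
  intro t ht
  have hsub : uIcc t T ⊆ Icc 0 T := by
    rw [uIcc_of_le ht.2]; exact Icc_subset_Icc ht.1 le_rfl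
  have h1 := inner_ac (a := t) (b := T) hA hA
    (fun s hs r hr => hu s (hsub hs) r (hsub hr)) (fun s hs r hr => hu s (hsub hs) r (hsub hr))
  have h2 : AbsolutelyContinuousOnInterval (fun s : ℝ => Real.exp (2 * L * s)) t T := by
    apply ContDiffOn.absolutelyContinuousOnInterval
    fun_prop
  have h3 := (h1.fun_mul h2).integral_deriv_eq_sub
  have h4 : 0 ≤ ∫ x in t..T, deriv (fun s => inner ℝ (u s) (u s) * Real.exp (2 * L * s)) x := by
    apply intervalIntegral.integral_nonneg_of_ae_restrict ht.2
    have hd' := ae_restrict_of_ae_restrict_of_subset (Icc_subset_Icc ht.1 le_rfl) hd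
    have hb' := ae_restrict_of_ae_restrict_of_subset (Icc_subset_Icc ht.1 le_rfl) hb
    filter_upwards [hd', hb'] with x hx hbx
    have e1 := hx.inner ℝ hx
    have e2 : HasDerivAt (fun s : ℝ => Real.exp (2 * L * s)) (Real.exp (2 * L * x) * (2 * L)) x := by
      have := ((hasDerivAt_id x).const_mul (2 * L)).exp
      simpa using this
    rw [(e1.fun_mul e2).deriv]
    have e3 := abs_real_inner_le_norm (u x) (u' x)
    have e4 := (abs_le.1 e3).1
    have e5 : ‖u x‖ * ‖u' x‖ ≤ ‖u x‖ * (L * ‖u x‖) :=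
      mul_le_mul_of_nonneg_left hbx (norm_nonneg _)
    rw [real_inner_comm (u x) (u' x), real_inner_self_eq_norm_sq]
    have e6 : 0 ≤ 2 * inner ℝ (u x) (u' x) + ‖u x‖ ^ 2 * (2 * L) := by nlinarith
    have := mul_nonneg e6 (Real.exp_pos (2 * L * x)).le
    simp only [Pi.zero_apply]
    nlinarith
  rw [h3] at h4
  rw [real_inner_self_eq_norm_sq, real_inner_self_eq_norm_sq] at h4
  have h5 : (1:ℝ) ≤ Real.exp (2 * L * t) := by
    apply Real.one_le_exp; have := ht.1; positivity
  have h6 : Real.exp (2 * L * T) = Real.exp (L * T) ^ 2 := by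
    rw [← Real.exp_nat_mul]; congr 1; push_cast; ring
  have h7 : ‖u t‖ ^ 2 ≤ (Real.exp (L * T) * ‖u T‖) ^ 2 := by
    rw [mul_pow, ← h6]
    nlinarith [sq_nonneg ‖u t‖]
  exact le_of_sq_le_sq h7 (by positivity)

lemma grad_meas {N : ℕ} {T : ℝ} {c : EuclideanSpace ℝ (Fin N) → ℝ → ℝ}
    (hc : Measurable (Function.uncurry c))
    (hdiff : ∀ᵐ t ∂(volume.restrict (Icc 0 T)), Differentiable ℝ (fun x => c x t))
    {y : ℝ → EuclideanSpace ℝ (Fin N)} (hy : ContinuousOn y (Icc 0 T)) :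
    AEStronglyMeasurable (fun s => gradient (fun x => c x s) (y s))
      (volume.restrict (Icc 0 T)) := by
  have hym : AEMeasurable y (volume.restrict (Icc 0 T)) := hy.aemeasurable measurableSet_Icc
  let b := EuclideanSpace.basisFun (Fin N) ℝ
  have hcm : ∀ v, AEMeasurable (fun s => c (y s + v) s) (volume.restrict (Icc 0 T)) := by
    intro v
    exact hc.comp_aemeasurable ((hym.add_const v).prodMk aemeasurable_id)
  let r : ℕ → ℝ := fun n => 1 / ((n : ℝ) + 1)
  have hr : Tendsto r atTop (𝓝[>] 0) := by
    apply tendsto_nhdsWithin_iff.2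
    exact ⟨tendsto_one_div_add_atTop_nhds_zero_nat,
      Eventually.of_forall fun n => by simp only [r, mem_Ioi]; positivity⟩
  refine aestronglyMeasurable_of_tendsto_ae (u := atTop)
    (f := fun n s => ∑ i, ((r n)⁻¹ * (c (y s + r n • b i) s - c (y s + 0) s)) • b i) ?_ ?_
  · intro n
    refine Finset.aestronglyMeasurable_fun_sum _ fun i _ => ?_
    exact ((((hcm _).sub (hcm _)).const_mul _).smul_const _).aestronglyMeasurable
  · filter_upwards [hdiff] with s hs
    have h1 := b.sum_repr' (gradient (fun x => c x s) (y s))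
    rw [← h1]
    refine tendsto_finsetSum _ fun i _ => ?_
    refine Tendsto.smul_const ?_ _
    have hg := (hs (y s)).hasGradientAt.hasFDerivAt
    have hl := (hg.hasLineDerivAt (b i)).tendsto_slope_zero_right.comp hr
    have e : inner ℝ (b i) (gradient (fun x => c x s) (y s)) =
      ((InnerProductSpace.toDual ℝ (EuclideanSpace ℝ (Fin N)))
        (gradient (fun x => c x s) (y s))) (b i) := by
      rw [InnerProductSpace.toDual_apply_apply, real_inner_comm]
    rw [e]
    simpa [Function.comp_def, smul_eq_mul] using hl

lemma grad_bound {E : Type*} [NormedAddCommGroup E] [InnerProductSpace ℝ E] [CompleteSpace E]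
    {L : ℝ} (hL : 0 ≤ L) {f : E → ℝ} 
    (h : ∀ x y, |f x - f y| ≤ L * ‖x - y‖) (x : E) : ‖gradient f x‖ ≤ L := by
  rw [gradient, LinearIsometryEquiv.norm_map]
  have : LipschitzWith (Real.toNNReal L) f := by
    apply LipschitzWith.of_dist_le_mul
    intro x y
    rw [Real.coe_toNNReal _ hL, Real.dist_eq, dist_eq_norm]; exact h x y
  have := norm_fderiv_le_of_lipschitz ℝ (x₀ := x) this
  rwa [Real.coe_toNNReal _ hL] at this

lemma taylor {E : Type*} [NormedAddCommGroup E] [InnerProductSpace ℝ E] [CompleteSpace E]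
    {K : ℝ} (hK : 0 ≤ K) {f : E → ℝ} (hf : Differentiable ℝ f)
    (h : ∀ x y, ‖gradient f x - gradient f y‖ ≤ K * ‖x - y‖) (x w : E) :
    f x - inner ℝ (gradient f x) w - K * ‖w‖ ^ 2 ≤ f (x - w) := by
  have h1 := Convex.norm_image_sub_le_of_norm_hasFDerivWithin_le' (𝕜 := ℝ) (f := f)
    (s := Metric.closedBall x ‖w‖) (x := x) (y := x - w) (C := K * ‖w‖)
    (f' := fun z => InnerProductSpace.toDual ℝ E (gradient f z))
    (φ := InnerProductSpace.toDual ℝ E (gradient f x))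
    (fun z _ => (hf z).hasGradientAt.hasFDerivAt.hasFDerivWithinAt)
    (fun z hz => by
      rw [← map_sub, LinearIsometryEquiv.norm_map]
      refine (h z x).trans ?_
      rw [mem_closedBall_iff_norm] at hz
      exact mul_le_mul_of_nonneg_left hz hK)
    (convex_closedBall _ _) (by simp) (by simp)
  rw [InnerProductSpace.toDual_apply_apply] at h1
  have h2 := (abs_le.1 h1).1
  simp only [sub_sub_cancel_left, inner_neg_right, norm_neg] at h2
  nlinarith

/-- The pointwise algebraic estimate. -/
lemma pointwise {E : Type*} [NormedAddCommGroup E] [InnerProductSpace ℝ E]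
    {T K δ k γ t a cy : ℝ} {e q : E} (hK : 0 ≤ K) (hγ : 0 < γ) (hk : 0 < k)
    (hδ : 0 < δ) (ht0 : 0 ≤ t) (htT : t ≤ T)
    (he : ‖e‖ = 1) (ha : δ / 2 ≤ a) (hs : k * ‖q‖ ^ 2 ≤ inner ℝ e q)
    (h1 : γ ≤ δ * k / 2) (h2 : 2 * K * T ^ 2 * γ ≤ k)
    (hcy : a - K * ‖(γ * t) • q‖ ^ 2 ≤ cy) :
    ‖a • e - γ • q‖ ≤ cy := by
  have hQ := sq_nonneg ‖q‖
  have hn : ‖a • e - γ • q‖ ^ 2 = a ^ 2 - 2 * γ * a * inner ℝ e q + γ ^ 2 * ‖q‖ ^ 2 := by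
    rw [norm_sub_sq_real, norm_smul, norm_smul, inner_smul_left, inner_smul_right, he,
      mul_pow, mul_pow, Real.norm_eq_abs, Real.norm_eq_abs, sq_abs, sq_abs]
    simp
    ring
  have hn2 : ‖(γ * t) • q‖ ^ 2 = γ ^ 2 * t ^ 2 * ‖q‖ ^ 2 := by
    rw [norm_smul, mul_pow, Real.norm_eq_abs, sq_abs]; ring
  rw [hn2] at hcy
  have ha0 : 0 < a := by linarith
  have ht2 : t ^ 2 ≤ T ^ 2 := by gcongr
  set Q := ‖q‖ ^ 2
  set B := K * (γ ^ 2 * t ^ 2 * Q) with hB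
  have hB0 : 0 ≤ B := by positivity
  have hB1 : 2 * B ≤ γ * (k * Q) := by
    have : K * (γ ^ 2 * t ^ 2 * Q) ≤ K * (γ ^ 2 * T ^ 2 * Q) := by gcongr
    have h3 : (2 * K * T ^ 2 * γ) * (γ * Q) ≤ k * (γ * Q) := by gcongr
    nlinarith
  have hg : γ ^ 2 * Q ≤ γ * a * (k * Q) := by
    have : γ ≤ a * k := by nlinarith
    have := mul_le_mul_of_nonneg_right this (by positivity : 0 ≤ γ * Q)
    nlinarith
  have hss : γ * a * (k * Q) ≤ γ * a * inner ℝ e q := by gcongr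
  have h5 : a * (2 * B) ≤ a * (γ * (k * Q)) := by gcongr
  have h6 : ‖a • e - γ • q‖ ^ 2 ≤ a * (a - 2 * B) := by rw [hn]; nlinarith
  have h7 : 0 ≤ a - 2 * B := by
    by_contra hneg
    push Not at hneg
    have := mul_neg_of_pos_of_neg ha0 hneg
    nlinarith [sq_nonneg ‖a • e - γ • q‖]
  have h8 : ‖a • e - γ • q‖ ≤ a - B := by
    apply le_of_sq_le_sq _ (by linarith)
    nlinarith [sq_nonneg B]
  linarith

lemma rank_one_cont (E : Type*) [NormedAddCommGroup E] [InnerProductSpace ℝ E] :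
    Continuous (fun z : (ℝ × E) × E × (E →L[ℝ] E) =>
      z.1.1 • ((innerSL ℝ z.1.2).smulRight z.2.1).comp z.2.2) := by
  have h2 : Continuous (fun z : (ℝ × E) × E × (E →L[ℝ] E) =>
      (innerSL ℝ z.1.2).smulRight z.2.1) := by
    have h3 := (ContinuousLinearMap.smulRightL ℝ E E).continuous₂
    have h4 : Continuous (fun z : (ℝ × E) × E × (E →L[ℝ] E) => (innerSL ℝ z.1.2, z.2.1)) :=
      ((innerSL ℝ).continuous.comp (by fun_prop)).prodMk (by fun_prop)
    exact h3.comp h4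
  exact (by fun_prop : Continuous (fun z : (ℝ × E) × E × (E →L[ℝ] E) => z.1.1)).smul
    (h2.clm_comp (by fun_prop))

lemma rank_one_meas {E : Type*} [NormedAddCommGroup E] [InnerProductSpace ℝ E]
    {μ : Measure ℝ} {r : ℝ → ℝ} {g p : ℝ → E} {P : ℝ → E →L[ℝ] E}
    (hr : AEStronglyMeasurable r μ) (hg : AEStronglyMeasurable g μ)
    (hp : AEStronglyMeasurable p μ) (hP : AEStronglyMeasurable P μ) :
    AEStronglyMeasurable (fun s => r s • ((innerSL ℝ (g s)).smulRight (p s)).comp (P s)) μ :=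
  (rank_one_cont E).comp_aestronglyMeasurable ((hr.prodMk hg).prodMk (hp.prodMk hP))

lemma clm_deriv {E : Type*} [NormedAddCommGroup E] [InnerProductSpace ℝ E]
    {P : ℝ → E →L[ℝ] E} {g p : E} {r t : ℝ} (w : E)
    (h : HasDerivAt P (r • ((innerSL ℝ g).smulRight p).comp (P t)) t) :
    HasDerivAt (fun s => P s w) ((inner ℝ g (P t w)) • (r • p)) t := by
  refine (h.clm_apply (hasDerivAt_const t w)).congr_deriv ?_
  simp [smul_smul, mul_comm]

end Stmt13Aux

open Stmt13Aux

set_option maxHeartbeats 1000000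

/-- Key perturbation estimate for the interior ball regularization.
Given constants `T > 0`, `L₁, N₁ ≥ 0`, `0 < δ ≤ M₁`, there exists `γ > 0` depending
only on these constants such that: for any dimension `N ≥ 1`, any Borel measurable
velocity `c : ℝ^N × [0,T] → ℝ` which for a.e. `t` is `C¹` in `x` with
`|c(x,t) − c(y,t)| ≤ L₁|x−y|`, `|D_x c(x,t) − D_x c(y,t)| ≤ N₁|x−y|`,
`δ ≤ c ≤ M₁`, any extremal pair `(y₀, p₀)` of the Pontryagin system
`ẏ₀ = c(y₀,t) p₀/|p₀|`, `ṗ₀ = −D_x c(y₀,t)|p₀|` with `p₀ ≠ 0`, `|p₀(T)| = 1`, and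
any fundamental solution `P` of `Ṗ = (1/|p₀|) p₀ (D_x c(y₀,t))ᵀ P`, `P(T) = Id`
(absolute continuity and a.e. ODEs encoded by the equivalent integral equations;
matrices acting on `ℝ^N` represented as continuous linear maps, with
`D_x c` the gradient and the outer product `p qᵀ` being `v ↦ ⟪q, v⟫ p`),
for every `θ` in the closed unit ball, the perturbed arc
`y_θ(t) = y₀(t) − γ t P(t)(θ₀ − θ)` (with `θ₀ = p₀(T)`) satisfies
`|ẏ_θ(t)| ≤ c(y_θ(t), t)` for a.e. `t ∈ [0,T]`. -/
theorem stmt_13 (T L₁ N₁ M₁ δ : ℝ)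
    (hT : 0 < T) (hL₁ : 0 ≤ L₁) (hN₁ : 0 ≤ N₁) (hδ : 0 < δ) (hδM : δ ≤ M₁) :
    ∃ γ : ℝ, 0 < γ ∧
      ∀ (N : ℕ), 1 ≤ N →
      ∀ (c : EuclideanSpace ℝ (Fin N) → ℝ → ℝ),
      Measurable (Function.uncurry c) →
      (∀ᵐ t ∂(volume.restrict (Set.Icc 0 T)),
        ContDiff ℝ 1 (fun x => c x t) ∧
        ∀ x y : EuclideanSpace ℝ (Fin N),
          |c x t - c y t| ≤ L₁ * ‖x - y‖ ∧
          ‖gradient (fun z => c z t) x - gradient (fun z => c z t) y‖ ≤ N₁ * ‖x - y‖ ∧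
          δ ≤ c x t ∧ c x t ≤ M₁) →
      ∀ (y₀ p₀ : ℝ → EuclideanSpace ℝ (Fin N))
        (P : ℝ → (EuclideanSpace ℝ (Fin N) →L[ℝ] EuclideanSpace ℝ (Fin N))),
      ContinuousOn y₀ (Set.Icc 0 T) →
      ContinuousOn p₀ (Set.Icc 0 T) →
      ContinuousOn P (Set.Icc 0 T) →
      (∀ t ∈ Set.Icc (0:ℝ) T, p₀ t ≠ 0) →
      ‖p₀ T‖ = 1 →
      (∀ t ∈ Set.Icc (0:ℝ) T,
        y₀ t = y₀ 0 + ∫ s in (0:ℝ)..t, (c (y₀ s) s / ‖p₀ s‖) • p₀ s) →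
      (∀ t ∈ Set.Icc (0:ℝ) T,
        p₀ t = p₀ 0 - ∫ s in (0:ℝ)..t, ‖p₀ s‖ • gradient (fun x => c x s) (y₀ s)) →
      (∀ t ∈ Set.Icc (0:ℝ) T,
        P t = P 0 + ∫ s in (0:ℝ)..t,
          ‖p₀ s‖⁻¹ •
            (((innerSL ℝ (gradient (fun x => c x s) (y₀ s))).smulRight (p₀ s)).comp
              (P s))) →
      P T = ContinuousLinearMap.id ℝ (EuclideanSpace ℝ (Fin N)) →
      ∀ θ : EuclideanSpace ℝ (Fin N), ‖θ‖ ≤ 1 →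
        ∀ᵐ t ∂(volume.restrict (Set.Icc 0 T)),
          ∃ v : EuclideanSpace ℝ (Fin N),
            HasDerivAt (fun s : ℝ => y₀ s - (γ * s) • (P s) (p₀ T - θ)) v t ∧
            ‖v‖ ≤ c (y₀ t - (γ * t) • (P t) (p₀ T - θ)) t := by
  set E := Real.exp (L₁ * T) with hE
  have hE0 : 0 < E := Real.exp_pos _
  set k := 1 / (2 * E ^ 3) with hk
  have hk0 : 0 < k := by positivity
  obtain ⟨γ, hγ, hγ1, hγ2, hγ3⟩ : ∃ γ : ℝ, 0 < γ ∧ γ ≤ δ * k / 2 ∧ 2 * N₁ * T ^ 2 * γ ≤ k ∧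
      4 * T * L₁ * E * γ ≤ δ := by
    refine ⟨min (δ * k / 2) (min (k / (2 * N₁ * T ^ 2 + 1)) (δ / (4 * T * L₁ * E + 1))),
      by positivity, min_le_left _ _, ?_, ?_⟩
    · have h1 : min (δ * k / 2) (min (k / (2 * N₁ * T ^ 2 + 1)) (δ / (4 * T * L₁ * E + 1)))
          ≤ k / (2 * N₁ * T ^ 2 + 1) := (min_le_right _ _).trans (min_le_left _ _)
      refine (mul_le_mul_of_nonneg_left h1 (by positivity)).trans ?_
      rw [mul_div_assoc', div_le_iff₀ (by positivity)]
      nlinarith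
    · have h1 : min (δ * k / 2) (min (k / (2 * N₁ * T ^ 2 + 1)) (δ / (4 * T * L₁ * E + 1)))
          ≤ δ / (4 * T * L₁ * E + 1) := (min_le_right _ _).trans (min_le_right _ _)
      refine (mul_le_mul_of_nonneg_left h1 (by positivity)).trans ?_
      rw [mul_div_assoc', div_le_iff₀ (by positivity)]
      nlinarith
  refine ⟨γ, hγ, ?_⟩
  intro N _ c hcm hc y₀ p₀ P hy hp hP hp0 hpT hyi hpi hPi hPT θ hθ
  have hM₁ : 0 ≤ M₁ := hδ.le.trans hδM
  have hmemI : ∀ᵐ t ∂(volume.restrict (Set.Icc 0 T)), t ∈ Set.Icc (0:ℝ) T :=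
    ae_restrict_mem measurableSet_Icc
  have hdiff : ∀ᵐ t ∂(volume.restrict (Set.Icc 0 T)), Differentiable ℝ (fun x => c x t) := by
    filter_upwards [hc] with t ht using ht.1.differentiable (by norm_num)
  set g : ℝ → EuclideanSpace ℝ (Fin N) := fun s => gradient (fun x => c x s) (y₀ s) with hg
  have hgm : AEStronglyMeasurable g (volume.restrict (Set.Icc 0 T)) := grad_meas hcm hdiff hy
  have hgb : ∀ᵐ t ∂(volume.restrict (Set.Icc 0 T)), ‖g t‖ ≤ L₁ := by
    filter_upwards [hc] with t ht
    exact grad_bound hL₁ (fun x y => (ht.2 x y).1) _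
  have hym : AEStronglyMeasurable y₀ (volume.restrict (Set.Icc 0 T)) :=
    hy.aestronglyMeasurable measurableSet_Icc
  have hpm : AEStronglyMeasurable p₀ (volume.restrict (Set.Icc 0 T)) :=
    hp.aestronglyMeasurable measurableSet_Icc
  have hPm : AEStronglyMeasurable P (volume.restrict (Set.Icc 0 T)) :=
    hP.aestronglyMeasurable measurableSet_Icc
  have hcym : AEStronglyMeasurable (fun s => c (y₀ s) s) (volume.restrict (Set.Icc 0 T)) :=
    (hcm.comp_aemeasurable (hym.aemeasurable.prodMk aemeasurable_id)).aestronglyMeasurable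
  have hpinv : AEStronglyMeasurable (fun s => ‖p₀ s‖⁻¹) (volume.restrict (Set.Icc 0 T)) :=
    hpm.norm.aemeasurable.inv.aestronglyMeasurable
  obtain ⟨Bp, hBp⟩ := isCompact_Icc.exists_bound_of_continuousOn hp
  obtain ⟨BP, hBP⟩ := isCompact_Icc.exists_bound_of_continuousOn hP
  have hBp0 : 0 ≤ Bp := (norm_nonneg _).trans (hBp 0 ⟨le_rfl, hT.le⟩)
  have hBP0 : 0 ≤ BP := (norm_nonneg _).trans (hBP 0 ⟨le_rfl, hT.le⟩)
  obtain ⟨-, hyd⟩ := integral_eq_reg (C := M₁) hT hM₁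
    (f := fun s => (c (y₀ s) s / ‖p₀ s‖) • p₀ s)
    ((hcym.mul hpinv).smul hpm)
    (by
      filter_upwards [hc, hmemI] with t ht hti
      have h0 := norm_pos_iff.2 (hp0 t hti)
      have h1 := (ht.2 (y₀ t) (y₀ t)).2.2
      rw [norm_smul, norm_div, norm_norm, div_mul_cancel₀ _ h0.ne', Real.norm_eq_abs,
        abs_of_nonneg (hδ.le.trans h1.1)]
      exact h1.2) hyi
  obtain ⟨hpl, hpd⟩ := integral_eq_reg (C := Bp * L₁) hT (by positivity)
    (f := fun s => - (‖p₀ s‖ • g s)) (u := p₀)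
    ((hpm.norm.smul hgm).neg)
    (by
      filter_upwards [hgb, hmemI] with t ht hti
      rw [norm_neg, norm_smul, norm_norm]
      exact mul_le_mul (hBp t hti) ht (norm_nonneg _) hBp0)
    (by
      intro t ht
      rw [intervalIntegral.integral_neg, ← sub_eq_add_neg]
      exact hpi t ht)
  have hPnorm : ∀ t ∈ Set.Icc (0:ℝ) T, ‖‖p₀ t‖⁻¹ • (((innerSL ℝ (g t)).smulRight (p₀ t)).comp
      (P t))‖ ≤ ‖g t‖ * ‖P t‖ := by
    intro t hti
    have h0 := norm_pos_iff.2 (hp0 t hti)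
    rw [norm_smul, norm_inv, norm_norm, inv_mul_le_iff₀ h0]
    refine (ContinuousLinearMap.opNorm_comp_le _ _).trans ?_
    rw [ContinuousLinearMap.norm_smulRight_apply, innerSL_apply_norm]
    apply le_of_eq; ring
  have hPfm : AEStronglyMeasurable (fun s => ‖p₀ s‖⁻¹ • (((innerSL ℝ (g s)).smulRight (p₀ s)).comp
      (P s))) (volume.restrict (Set.Icc 0 T)) := by
    exact rank_one_meas hpinv hgm hpm hPm
  obtain ⟨hPl, hPd⟩ := integral_eq_reg (C := L₁ * BP) hT (by positivity)
    (f := fun s => ‖p₀ s‖⁻¹ • (((innerSL ℝ (g s)).smulRight (p₀ s)).comp (P s))) (u := P)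
    hPfm
    (by
      filter_upwards [hgb, hmemI] with t ht hti
      refine (hPnorm t hti).trans ?_
      exact mul_le_mul ht (hBP t hti) (norm_nonneg _) hL₁) hPi
  set w := p₀ T - θ with hw
  set q : ℝ → EuclideanSpace ℝ (Fin N) := fun s => P s w with hq
  have hql : ∀ s ∈ Set.Icc (0:ℝ) T, ∀ t ∈ Set.Icc (0:ℝ) T,
      ‖q s - q t‖ ≤ (L₁ * BP * ‖w‖) * |s - t| := by
    intro s hs t ht
    have h1 := (P s - P t).le_opNorm w
    have h2 := mul_le_mul_of_nonneg_right (hPl s hs t ht) (norm_nonneg w)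
    simp only [hq]
    rw [sub_apply] at h1
    nlinarith
  have hqd : ∀ᵐ t ∂(volume.restrict (Set.Icc 0 T)),
      HasDerivAt q ((inner ℝ (g t) (q t)) • (‖p₀ t‖⁻¹ • p₀ t)) t := by
    filter_upwards [hPd] with t ht
    exact clm_deriv w ht
  have hunit : ∀ t ∈ Set.Icc (0:ℝ) T, ‖‖p₀ t‖⁻¹ • p₀ t‖ = 1 := by
    intro t hti
    rw [norm_smul, norm_inv, norm_norm, inv_mul_cancel₀ (norm_pos_iff.2 (hp0 t hti)).ne']
  have hqE : ∀ t ∈ Set.Icc (0:ℝ) T, ‖q t‖ ≤ E * ‖w‖ := by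
    have h := gronwall_back hL₁ (by positivity) hql hqd (by
      filter_upwards [hgb, hmemI] with t ht hti
      rw [norm_smul, hunit t hti, mul_one]
      refine (norm_inner_le_norm _ _).trans ?_
      gcongr)
    have e : q T = w := by simp [hq, hPT]
    rwa [e] at h
  have hpE : ∀ t ∈ Set.Icc (0:ℝ) T, ‖p₀ t‖ ≤ E := by
    have h := gronwall_back hL₁ (by positivity) hpl hpd (by
      filter_upwards [hgb, hmemI] with t ht hti
      rw [norm_neg, norm_smul, norm_norm, mul_comm]
      gcongr)
    rwa [hpT, mul_one] at h
  have hconst : ∀ t ∈ Set.Icc (0:ℝ) T, inner ℝ (p₀ t) (q t) = inner ℝ (p₀ T) w := by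
    have hac := inner_ac (a := 0) (b := T) (A := Bp * L₁) (B := L₁ * BP * ‖w‖) (u := p₀) (v := q)
      (by positivity) (by positivity) (by rwa [Set.uIcc_of_le hT.le])
      (by rwa [Set.uIcc_of_le hT.le])
    obtain ⟨C, hC⟩ := hac.const_of_ae_hasDerivAt_zero (by
      rw [Set.uIcc_of_le hT.le, ← ae_restrict_iff' measurableSet_Icc]
      filter_upwards [hpd, hqd, hmemI] with t h1 h2 hti
      have h3 := h1.inner ℝ h2
      refine h3.congr_deriv ?_
      have h0 := norm_pos_iff.2 (hp0 t hti)
      rw [inner_smul_right, inner_smul_right, inner_neg_left, inner_smul_left,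
        real_inner_self_eq_norm_sq]
      simp
      field_simp
      ring)
    rw [Set.uIcc_of_le hT.le] at hC
    intro t ht
    have e : q T = w := by simp [hq, hPT]
    have h1 := hC T ⟨hT.le, le_rfl⟩
    have h2 := hC t ht
    simp only [e] at h1
    rw [h1]; exact h2
  have hkap : ‖w‖ ^ 2 / 2 ≤ inner ℝ (p₀ T) w := by
    have h1 : ‖θ‖ ^ 2 = ‖p₀ T‖ ^ 2 - 2 * inner ℝ (p₀ T) w + ‖w‖ ^ 2 := by
      rw [← norm_sub_sq_real]; simp [hw]
    have h2 : ‖θ‖ ^ 2 ≤ 1 := by nlinarith [norm_nonneg θ]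
    rw [hpT] at h1
    linarith
  have hw2 : ‖w‖ ≤ 2 := by
    have := norm_sub_le (p₀ T) θ
    rw [hpT] at this
    linarith
  filter_upwards [hyd, hqd, hgb, hc, hdiff, hmemI] with t h1 h2 h3 h4 h5 hti
  have h0 := norm_pos_iff.2 (hp0 t hti)
  set e := ‖p₀ t‖⁻¹ • p₀ t with he
  set a := c (y₀ t) t - γ * t * inner ℝ (g t) (q t) with ha
  refine ⟨a • e - γ • q t, ?_, ?_⟩
  · have h6 := h1.fun_sub ((((hasDerivAt_id t).const_mul γ)).fun_smul h2)
    refine h6.congr_deriv ?_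
    simp only [ha, he, id, mul_one, smul_smul, div_eq_mul_inv, sub_mul, sub_smul, sub_sub]
    congr 2
    ring_nf
  · have hqt := hqE t hti
    have htl := taylor hN₁ h5 (fun x y => (h4.2 x y).2.1) (y₀ t) ((γ * t) • q t)
    have hi := abs_le.1 ((abs_real_inner_le_norm (g t) (q t)).trans
      (mul_le_mul h3 (hqt.trans (mul_le_mul_of_nonneg_left hw2 hE0.le)) (norm_nonneg _) hL₁))
    refine pointwise hN₁ hγ hk0 hδ hti.1 hti.2 (hunit t hti) ?_ ?_ hγ1 hγ2 ?_
    · have h6 := (h4.2 (y₀ t) (y₀ t)).2.2.1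
      have h7 : γ * t * inner ℝ (g t) (q t) ≤ γ * T * (L₁ * (E * 2)) := by
        have hh : γ * t * inner ℝ (g t) (q t) ≤ γ * t * (L₁ * (E * 2)) :=
          mul_le_mul_of_nonneg_left hi.2 (mul_nonneg hγ.le hti.1)
        refine hh.trans ?_
        have := hti.2
        gcongr
      rw [ha]
      nlinarith
    · rw [real_inner_smul_left, hconst t hti]
      have h6 : ‖q t‖ ^ 2 ≤ (E * ‖w‖) ^ 2 := by gcongr
      have h7 : E⁻¹ ≤ ‖p₀ t‖⁻¹ := by
        gcongr
        exact hpE t hti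
      calc k * ‖q t‖ ^ 2 ≤ k * (E * ‖w‖) ^ 2 := by gcongr
        _ = E⁻¹ * (‖w‖ ^ 2 / 2) := by rw [hk]; field_simp
        _ ≤ ‖p₀ t‖⁻¹ * inner ℝ (p₀ T) w := by gcongr
    · rw [inner_smul_right] at htl
      exact htl
end

section
/- Let N ≥ 1, T > 0, and let constants L₁, N₁ ≥ 0 and 0 < δ ≤ M₁ be given. Let c : ℝ^N × [0,T] → ℝ be Borel measurable, continuously differentiable in x for almost every t, with |c(x,t) − c(y,t)| ≤ L₁|x − y|, |D_x c(x,t) − D_x c(y,t)| ≤ N₁|x − y| and δ ≤ c(x,t) ≤ M₁ for all x, y ∈ ℝ^N and almost every t ∈ [0,T]. Let K₀ ⊂ ℝ^N be a nonempty closed set and for t ∈ (0,T] let ℛ(t) = { x(t) : x : [0,t] → ℝ^N absolutely continuous, x(0) ∈ K₀, |ẋ(s)| ≤ c(x(s), s) for a.e. s ∈ [0,t] } be the reachable set at time t. Then there exists γ > 0, depending only on T, L₁, N₁, M₁ and δ, such that for every t ∈ (0,T] the set ℛ(t) has the interior ball property of radius γ t. -/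
open MeasureTheory

lemma ftc_le {f h : ℝ → ℝ} {a b : ℝ} (hab : a ≤ b)
    (hf : AbsolutelyContinuousOnInterval f a b) (hh : IntervalIntegrable h volume a b)
    (hd : ∀ᵐ s, s ∈ Set.Icc a b → ∃ d, HasDerivAt f d s ∧ d ≤ h s) :
    f b - f a ≤ ∫ s in a..b, h s := by
  rw [← hf.integral_deriv_eq_sub]
  apply intervalIntegral.integral_mono_ae_restrict hab hf.intervalIntegrable_deriv hh
  filter_upwards [ae_restrict_of_ae hd, ae_restrict_mem measurableSet_Icc] with s hs hm
  obtain ⟨d, h1, h2⟩ := hs hm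
  rw [h1.deriv]; exact h2

lemma norm_int_le {H : Type*} [NormedAddCommGroup H] [NormedSpace ℝ H] {G : ℝ → H}
    {t0 t1 C : ℝ} (h01 : t0 ≤ t1) (hC : 0 ≤ C)
    (hG : ∀ s, ‖G s‖ ≤ (Set.Icc t0 t1).indicator (fun _ => C) s) (a b : ℝ) :
    ‖∫ s in a..b, G s‖ ≤ (t1 - t0) * C := by
  have hi : Integrable ((Set.Icc t0 t1).indicator (fun _ => C)) volume := by
    rw [integrable_indicator_iff measurableSet_Icc]
    exact integrableOn_const (by simp) (by simp)
  calc ‖∫ s in a..b, G s‖ ≤ ∫ s in Set.uIoc a b, ‖G s‖ :=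
        intervalIntegral.norm_integral_le_integral_norm_uIoc
    _ ≤ ∫ s in Set.uIoc a b, (Set.Icc t0 t1).indicator (fun _ => C) s := by
        apply integral_mono_of_nonneg
        · exact Filter.Eventually.of_forall (fun s => norm_nonneg _)
        · exact hi.integrableOn
        · exact Filter.Eventually.of_forall hG
    _ ≤ ∫ s, (Set.Icc t0 t1).indicator (fun _ => C) s := by
        apply setIntegral_le_integral hi
        exact Filter.Eventually.of_forall (fun s => Set.indicator_nonneg (fun _ _ => hC) s)
    _ = (t1 - t0) * C := by
        rw [integral_indicator measurableSet_Icc]; simp [h01]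

lemma picard {H : Type*} [NormedAddCommGroup H] [NormedSpace ℝ H] [CompleteSpace H]
    (F : ℝ → H → H) {t0 t1 s0 K B : ℝ} (u0 : H) (h01 : t0 ≤ t1)
    (hK : 0 ≤ K) (hB : 0 ≤ B)
    (hmeas : ∀ u : ℝ → H, Continuous u → AEStronglyMeasurable (fun s => F s (u s)) volume)
    (hlip : ∀ s ∈ Set.Icc t0 t1, ∀ u v, ‖F s u - F s v‖ ≤ K * ‖u - v‖)
    (h0 : ∀ s ∈ Set.Icc t0 t1, ‖F s 0‖ ≤ B) (hsmall : (t1 - t0) * K ≤ 1 / 2) :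
    ∃ u : ℝ → H, (∃ C, LipschitzWith C u) ∧ u s0 = u0 ∧
      (∀ s, ‖u s‖ ≤ 2 * (‖u0‖ + (t1 - t0) * B)) ∧
      (∀ s, ‖u s - u0‖ ≤ (t1 - t0) * (B + K * (2 * (‖u0‖ + (t1 - t0) * B)))) ∧
      ∀ᵐ s, s ∈ Set.Icc t0 t1 → HasDerivAt u (F s (u s)) s := by
  have hh : 0 ≤ t1 - t0 := by linarith
  set G : (ℝ → H) → ℝ → H := fun u => (Set.Icc t0 t1).indicator (fun s => F s (u s)) with hGdef
  have hFb : ∀ s ∈ Set.Icc t0 t1, ∀ v, ‖F s v‖ ≤ B + K * ‖v‖ := by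
    intro s hs v
    have h1 := hlip s hs v 0
    have h2 := h0 s hs
    have h3 : ‖F s v‖ ≤ ‖F s v - F s 0‖ + ‖F s 0‖ := by
      simpa using norm_add_le (F s v - F s 0) (F s 0)
    rw [sub_zero] at h1
    linarith
  have hGb : ∀ (u : ℝ → H) (V : ℝ), (∀ s, ‖u s‖ ≤ V) → ∀ s,
      ‖G u s‖ ≤ (Set.Icc t0 t1).indicator (fun _ => B + K * V) s := by
    intro u V hV s
    by_cases hs : s ∈ Set.Icc t0 t1
    · simp only [hGdef, Set.indicator_of_mem hs]
      refine (hFb s hs _).trans ?_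
      have := mul_le_mul_of_nonneg_left (hV s) hK
      linarith
    · simp [hGdef, Set.indicator_of_notMem hs]
  have hGi : ∀ (u : ℝ → H) (V : ℝ), Continuous u → (∀ s, ‖u s‖ ≤ V) → Integrable (G u) volume := by
    intro u V hu hV
    have hi : Integrable ((Set.Icc t0 t1).indicator (fun _ => B + K * V)) volume := by
      rw [integrable_indicator_iff measurableSet_Icc]
      exact integrableOn_const (by simp) (by simp)
    exact hi.mono' ((hmeas u hu).indicator measurableSet_Icc)
      (Filter.Eventually.of_forall (hGb u V hV))
  have hGlip : ∀ (u : ℝ → H) (V : ℝ), 0 ≤ V → (∀ s, ‖u s‖ ≤ V) → Continuous u →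
      LipschitzWith (B + K * V).toNNReal (fun s => u0 + ∫ τ in s0..s, G u τ) := by
    intro u V hV0 hV hu
    have hC : 0 ≤ B + K * V := by positivity
    apply LipschitzWith.of_dist_le_mul
    intro x y
    rw [dist_eq_norm, Real.coe_toNNReal _ hC, add_sub_add_left_eq_sub,
      intervalIntegral.integral_interval_sub_left (hGi u V hu hV).intervalIntegrable
        (hGi u V hu hV).intervalIntegrable, Real.dist_eq]
    apply intervalIntegral.norm_integral_le_of_norm_le_const
    intro s _
    refine (hGb u V hV s).trans ?_
    exact Set.indicator_le_self' (fun _ _ => hC) s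
  -- the map
  let Φ : (BoundedContinuousFunction ℝ H) → (BoundedContinuousFunction ℝ H) := fun u =>
    BoundedContinuousFunction.ofNormedAddCommGroup (fun s => u0 + ∫ τ in s0..s, G u τ)
      (hGlip u ‖u‖ (norm_nonneg _) u.norm_coe_le_norm u.continuous).continuous
      (‖u0‖ + (t1 - t0) * (B + K * ‖u‖))
      (by
        intro s
        refine (norm_add_le _ _).trans ?_
        gcongr
        exact norm_int_le h01 (by positivity) (hGb u ‖u‖ u.norm_coe_le_norm) _ _)
  have hcontr : ContractingWith (1/2 : NNReal) Φ := by
    refine ⟨by norm_num [← NNReal.coe_lt_coe], ?_⟩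
    apply LipschitzWith.of_dist_le_mul
    intro u v
    rw [BoundedContinuousFunction.dist_le (by positivity)]
    intro s
    have e : Φ u s - Φ v s = ∫ τ in s0..s, (G u τ - G v τ) := by
      rw [intervalIntegral.integral_sub
        (hGi u ‖u‖ u.continuous u.norm_coe_le_norm).intervalIntegrable
        (hGi v ‖v‖ v.continuous v.norm_coe_le_norm).intervalIntegrable]
      simp [Φ]
    rw [dist_eq_norm, e]
    refine (norm_int_le (C := K * dist u v) h01 (by positivity) ?_ _ _).trans ?_
    · intro τ
      by_cases hs : τ ∈ Set.Icc t0 t1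
      · simp only [hGdef, Set.indicator_of_mem hs]
        refine (hlip τ hs _ _).trans ?_
        gcongr
        rw [← dist_eq_norm]
        exact BoundedContinuousFunction.dist_coe_le_dist τ
      · simp [hGdef, Set.indicator_of_notMem hs]
    · rw [← mul_assoc]
      gcongr
      simpa using hsmall
  obtain ⟨u, hu⟩ : ∃ u, Φ u = u := ⟨_, hcontr.fixedPoint_isFixedPt⟩
  have hus : ∀ s, u s = u0 + ∫ τ in s0..s, G u τ := by
    intro s
    conv_lhs => rw [← hu]
    rfl
  have hd : ∀ s, ‖u s - u0‖ ≤ (t1 - t0) * (B + K * ‖u‖) := by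
    intro s
    rw [hus s, add_sub_cancel_left]
    exact norm_int_le h01 (by positivity) (hGb u ‖u‖ u.norm_coe_le_norm) _ _
  have hV : ‖u‖ ≤ 2 * (‖u0‖ + (t1 - t0) * B) := by
    have : ‖u‖ ≤ ‖u0‖ + (t1 - t0) * (B + K * ‖u‖) := by
      rw [BoundedContinuousFunction.norm_le (by positivity)]
      intro s
      have h1 := hd s
      have h2 : ‖u s‖ ≤ ‖u s - u0‖ + ‖u0‖ := by simpa using norm_add_le (u s - u0) u0
      linarith
    have h3 := mul_le_mul_of_nonneg_right hsmall (norm_nonneg u)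
    nlinarith
  refine ⟨u, ⟨(B + K * ‖u‖).toNNReal, ?_⟩, ?_, ?_, ?_, ?_⟩
  · have := hGlip u ‖u‖ (norm_nonneg _) u.norm_coe_le_norm u.continuous
    convert this using 1
    funext s; exact hus s
  · rw [hus]; simp
  · intro s; exact (u.norm_coe_le_norm s).trans hV
  · intro s
    refine (hd s).trans ?_
    gcongr
  · have hli := (hGi u ‖u‖ u.continuous u.norm_coe_le_norm).locallyIntegrable
    filter_upwards [LocallyIntegrable.ae_hasDerivAt_integral hli] with s hs hm
    have h1 := (hs s0).const_add u0
    have e2 : G u s = F s (u s) := by simp only [hGdef, Set.indicator_of_mem hm]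
    exact (h1.congr_deriv e2).congr_of_eventuallyEq (Filter.Eventually.of_forall hus)

lemma nonpos_of_deriv {f : ℝ → ℝ} {t0 t1 : ℝ} {K : NNReal} (hf : LipschitzWith K f)
    (h0 : f t0 ≤ 0)
    (hd : ∀ᵐ s, s ∈ Set.Icc t0 t1 → 0 < f s → ∃ d, HasDerivAt f d s ∧ d ≤ 0) :
    ∀ s ∈ Set.Icc t0 t1, f s ≤ 0 := by
  intro s1 hs1
  by_contra hcon
  push Not at hcon
  have hcpt : IsCompact (Set.Icc t0 s1 ∩ {s | f s ≤ 0}) :=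
    isCompact_Icc.inter_right (isClosed_le hf.continuous continuous_const)
  obtain ⟨σ, hσ, hmax⟩ := hcpt.exists_isGreatest ⟨t0, ⟨le_refl _, hs1.1⟩, h0⟩
  have hac : AbsolutelyContinuousOnInterval f σ s1 :=
    (hf.lipschitzOnWith).absolutelyContinuousOnInterval
  have := ftc_le (h := fun _ => 0) hσ.1.2 hac (by simp) (by
    have hne : ∀ᵐ s : ℝ, s ≠ σ := by simp [ae_iff, measure_singleton]
    filter_upwards [hd, hne] with s hs hsne hm
    apply hs ⟨hσ.1.1.trans hm.1, hm.2.trans hs1.2⟩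
    by_contra hfs
    push Not at hfs
    have := hmax ⟨⟨hσ.1.1.trans hm.1, hm.2⟩, hfs⟩
    exact hsne (le_antisymm this hm.1))
  have h2 : f σ ≤ 0 := hσ.2
  simp at this
  linarith

section core
variable {E : Type*} [NormedAddCommGroup E] [InnerProductSpace ℝ E] [FiniteDimensional ℝ E]

lemma moving_ball {t0 t1 L κ M δ : ℝ} {M' : NNReal} (h01 : t0 ≤ t1) (hL : 0 ≤ L) (hLκ : L ≤ κ)
    (hδ : 0 < δ) (hδM : δ ≤ M) (hM' : (M' : ℝ) = M)
    (hsm : (t1 - t0) * (L + κ) * (8 * M) ≤ δ)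
    {X A : ℝ → E} {C : ℝ → ℝ} (hX : LipschitzWith M' X)
    (hA : StronglyMeasurable A) (hAL : ∀ s, ‖A s‖ ≤ L)
    (hC : Measurable C) (hC1 : ∀ s, δ ≤ C s) (hC2 : ∀ s, C s ≤ M)
    (hXC : ∀ᵐ s, s ∈ Set.Icc t0 t1 → ∃ v, HasDerivAt X v s ∧ ‖v‖ ≤ C s) :
    ∃ (a : ℝ → E) (r : ℝ → ℝ), (∃ K, LipschitzWith K a) ∧ (∃ K, LipschitzWith K r) ∧
      a t0 = X t0 ∧ r t0 = 0 ∧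
      (∀ᵐ s, s ∈ Set.Icc t0 t1 → HasDerivAt a (r s • A s + κ • (X s - a s)) s) ∧
      (∀ᵐ s, s ∈ Set.Icc t0 t1 →
        HasDerivAt r (C s - inner ℝ (A s) (X s - a s) - κ * r s) s) ∧
      (∀ s ∈ Set.Icc t0 t1, ‖X s - a s‖ ≤ r s ∧ δ / 2 * (s - t0) ≤ r s ∧
        r s ≤ 3 * (t1 - t0) * M) := by
  have : CompleteSpace E := FiniteDimensional.complete ℝ E
  have hM : 0 < M := hδ.trans_le hδM
  have hκ : 0 ≤ κ := hL.trans hLκ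
  set h := t1 - t0 with hh
  have hh0 : 0 ≤ h := by linarith
  have hhK : h * (L + κ) ≤ 1 / 8 := by
    have : h * (L + κ) * (8 * M) ≤ (1 / 8) * (8 * M) := by linarith
    exact le_of_mul_le_mul_right this (by linarith)
  have hXh : ∀ s ∈ Set.Icc t0 t1, ‖X s - X t0‖ ≤ M * h := by
    intro s hs
    have := hX.dist_le_mul s t0
    rw [dist_eq_norm, hM', Real.dist_eq, abs_of_nonneg (by linarith [hs.1])] at this
    refine this.trans ?_
    gcongr
    linarith [hs.2]
  let F : ℝ → E × ℝ → E × ℝ := fun s u =>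
    (u.2 • A s + κ • (X s - X t0 - u.1), C s - inner ℝ (A s) (X s - X t0 - u.1) - κ * u.2)
  obtain ⟨u, ⟨Cu, hCu⟩, hu0, hub, -, hud⟩ := picard (s0 := t0) (B := 3 / 2 * M) (K := L + κ)
    F (0 : E × ℝ) h01
    (by linarith) (by linarith)
    (by
      intro u hu
      have hXm : StronglyMeasurable X := hX.continuous.stronglyMeasurable
      have hu1 : StronglyMeasurable (fun s => (u s).1) := (continuous_fst.comp hu).stronglyMeasurable
      have hu2 : StronglyMeasurable (fun s => (u s).2) := (continuous_snd.comp hu).stronglyMeasurable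
      have hw : StronglyMeasurable (fun s => X s - X t0 - (u s).1) :=
        (hXm.sub stronglyMeasurable_const).sub hu1
      refine (StronglyMeasurable.prodMk ?_ ?_).aestronglyMeasurable
      · exact (hu2.smul hA).add (hw.const_smul κ)
      · exact (hC.stronglyMeasurable.sub (hA.inner hw)).sub (hu2.const_mul κ))
    (by
      intro s _ u v
      have h1 : ‖(u - v).1‖ ≤ ‖u - v‖ := norm_fst_le _
      have h2 : ‖(u - v).2‖ ≤ ‖u - v‖ := norm_snd_le _
      have hA' := hAL s
      rw [Prod.norm_def (F s u - F s v)]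
      apply max_le
      · have e : (F s u - F s v).1 = (u - v).2 • A s - κ • (u - v).1 := by
          simp only [F, Prod.fst_sub, Prod.snd_sub]; module
        rw [e]
        refine (norm_sub_le _ _).trans ?_
        rw [norm_smul, norm_smul, Real.norm_of_nonneg hκ]
        have h3 : ‖(u - v).2‖ * ‖A s‖ ≤ ‖u - v‖ * L := by gcongr
        have h4 : κ * ‖(u - v).1‖ ≤ κ * ‖u - v‖ := by gcongr
        linarith
      · have e : (F s u - F s v).2 = inner ℝ (A s) ((u - v).1) - κ * (u - v).2 := by
          simp only [F, Prod.fst_sub, Prod.snd_sub, inner_sub_right]; ring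
        rw [e]
        refine (norm_sub_le _ _).trans ?_
        rw [norm_mul, Real.norm_of_nonneg hκ]
        have h3 : ‖inner ℝ (A s) ((u - v).1)‖ ≤ L * ‖u - v‖ :=
          (norm_inner_le_norm _ _).trans (by gcongr)
        have h4 : κ * ‖(u - v).2‖ ≤ κ * ‖u - v‖ := by gcongr
        linarith)
    (by
      intro s hs
      have hA' := hAL s
      have hx := hXh s hs
      have h5 : (L + κ) * (M * h) ≤ 1 / 8 * M := by nlinarith
      rw [Prod.norm_def]
      apply max_le
      · simp only [F, Prod.fst_zero, Prod.snd_zero, zero_smul, zero_add, sub_zero]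
        rw [norm_smul, Real.norm_of_nonneg hκ]
        have h4 : κ * ‖X s - X t0‖ ≤ κ * (M * h) := by gcongr
        have h6 : 0 ≤ L * (M * h) := by positivity
        linarith
      · simp only [F, Prod.fst_zero, Prod.snd_zero, mul_zero, sub_zero]
        refine (norm_sub_le _ _).trans ?_
        rw [Real.norm_of_nonneg (hδ.le.trans (hC1 s))]
        have h3 : ‖inner ℝ (A s) (X s - X t0)‖ ≤ L * (M * h) :=
          (norm_inner_le_norm _ _).trans (by gcongr)
        have h6 : 0 ≤ κ * (M * h) := by positivity
        linarith [hC2 s])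
    (by linarith)
  have hub' : ∀ s, ‖u s‖ ≤ 3 * h * M := by
    intro s
    have := hub s
    simp only [norm_zero, zero_add] at this
    linarith
  have hab : ∀ s ∈ Set.Icc t0 t1, ‖X s - (X t0 + (u s).1)‖ ≤ 4 * h * M := by
    intro s hs
    have h1 : ‖(u s).1‖ ≤ ‖u s‖ := norm_fst_le _
    rw [← sub_sub]
    refine (norm_sub_le _ _).trans ?_
    linarith [hXh s hs, hub' s]
  have hrb : ∀ s, |(u s).2| ≤ 3 * h * M := by
    intro s
    have h1 : ‖(u s).2‖ ≤ ‖u s‖ := norm_snd_le _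
    rw [Real.norm_eq_abs] at h1
    linarith [hub' s]
  have hal : LipschitzWith Cu (fun s => X t0 + (u s).1) := by
    have h1 : LipschitzWith (1 * Cu) (fun s => (u s).1) := LipschitzWith.prod_fst.comp hCu
    apply LipschitzWith.of_dist_le_mul
    intro x y
    rw [dist_add_left]
    simpa using h1.dist_le_mul x y
  have hrl : LipschitzWith Cu (fun s => (u s).2) := by
    have h1 : LipschitzWith (1 * Cu) (fun s => (u s).2) := LipschitzWith.prod_snd.comp hCu
    simpa using h1
  have had : ∀ᵐ s, s ∈ Set.Icc t0 t1 → HasDerivAt (fun s => X t0 + (u s).1)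
      ((u s).2 • A s + κ • (X s - (X t0 + (u s).1))) s := by
    filter_upwards [hud] with s hs hm
    have h1 : HasDerivAt (fun s => (u s).1) _ s := (hs hm).fst
    exact (h1.const_add (X t0)).congr_deriv (by simp only [F, sub_sub])
  have hrd : ∀ᵐ s, s ∈ Set.Icc t0 t1 → HasDerivAt (fun s => (u s).2)
      (C s - inner ℝ (A s) (X s - (X t0 + (u s).1)) - κ * (u s).2) s := by
    filter_upwards [hud] with s hs hm
    have h1 : HasDerivAt (fun s => (u s).2) _ s := (hs hm).snd
    exact h1.congr_deriv (by simp only [F, sub_sub])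
  have hr0 : (u t0).2 = 0 := by rw [hu0]; rfl
  have hrlow : ∀ s ∈ Set.Icc t0 t1, δ / 2 * (s - t0) ≤ (u s).2 := by
    intro s hs
    have hac : AbsolutelyContinuousOnInterval (fun s => -(u s).2) t0 s :=
      (hrl.neg.lipschitzOnWith).absolutelyContinuousOnInterval
    have := ftc_le (h := fun _ => - (δ / 2)) hs.1 hac (by simp) (by
      filter_upwards [hrd] with σ hσ hm
      have hm' : σ ∈ Set.Icc t0 t1 := ⟨hm.1, hm.2.trans hs.2⟩
      refine ⟨_, (hσ hm').neg, ?_⟩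
      have h1 : inner ℝ (A σ) (X σ - (X t0 + (u σ).1)) ≤ L * (4 * h * M) :=
        (real_inner_le_norm _ _).trans (by gcongr; exacts [hAL σ, hab σ hm'])
      have h2 : κ * (u σ).2 ≤ κ * (3 * h * M) := by
        gcongr; exact (le_abs_self _).trans (hrb σ)
      have h3 : 0 ≤ κ * (h * M) := by positivity
      nlinarith [hC1 σ])
    simp only [intervalIntegral.integral_const, smul_eq_mul, hr0] at this
    linarith
  refine ⟨fun s => X t0 + (u s).1, fun s => (u s).2, ⟨_, hal⟩, ⟨_, hrl⟩, ?_, hr0, had, hrd, ?_⟩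
  · simp [hu0]
  have hpsi : ∀ s ∈ Set.Icc t0 t1, ‖X s - (X t0 + (u s).1)‖ - (u s).2 ≤ 0 := by
    have hbl := hX.sub hal
    have hnl := (lipschitzWith_one_norm.comp hbl).sub hrl
    refine nonpos_of_deriv (f := fun s => ‖X s - (X t0 + (u s).1)‖ - (u s).2) hnl ?_ ?_
    · simp [hu0]
    · filter_upwards [had, hrd, hXC] with s h1 h2 h3 hm hpos
      obtain ⟨v, hv, hvC⟩ := h3 hm
      have hb := hv.sub (h1 hm)
      have hr := h2 hm
      set b := X s - (X t0 + (u s).1) with hbdef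
      set r := (u s).2 with hrdef
      have hrpos : 0 ≤ r := le_trans (mul_nonneg (by linarith) (by linarith [hm.1])) (hrlow s hm)
      have hbpos : 0 < ‖b‖ := by linarith
      have hn : HasDerivAt (fun s => ‖X s - (X t0 + (u s).1)‖)
          (2 * inner ℝ b (v - (r • A s + κ • b)) / (2 * ‖b‖)) s := by
        have h4 := (hb.norm_sq).sqrt (by
          simp only [Pi.sub_apply]
          rw [← hbdef]; positivity)
        simpa [Real.sqrt_sq (norm_nonneg _), ← hbdef] using h4
      refine ⟨_, hn.sub hr, ?_⟩
      rw [mul_div_mul_left _ _ two_ne_zero, sub_nonpos, div_le_iff₀ hbpos]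
      rw [inner_sub_right, inner_add_right, real_inner_smul_right, real_inner_smul_right,
        real_inner_self_eq_norm_sq, real_inner_comm b (A s)]
      have h5 : inner ℝ b v ≤ ‖b‖ * C s := (real_inner_le_norm _ _).trans (by gcongr)
      have h6 : inner ℝ (A s) b ≤ κ * ‖b‖ :=
        (real_inner_le_norm _ _).trans (by gcongr; exact (hAL s).trans hLκ)
      have h7 := mul_le_mul_of_nonneg_left h6 hpos.le
      rw [real_inner_comm b (A s)] at *
      nlinarith
  intro s hs
  exact ⟨by linarith [hpsi s hs], hrlow s hs, (le_abs_self _).trans (hrb s)⟩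

lemma norm_le_of_deriv {E : Type*} [NormedAddCommGroup E] [InnerProductSpace ℝ E] {Y : ℝ → E} {h : ℝ → ℝ} {a b : ℝ} (hab : a ≤ b)
    (hY : ∀ v, AbsolutelyContinuousOnInterval (fun s => inner ℝ v (Y s)) a b)
    (hh : IntervalIntegrable h volume a b)
    (hd : ∀ᵐ s, s ∈ Set.Icc a b → ∃ w, HasDerivAt Y w s ∧ ‖w‖ ≤ h s) :
    ‖Y b - Y a‖ ≤ ∫ s in a..b, h s := by
  set v := Y b - Y a with hv
  have h1 := ftc_le (h := fun s => ‖v‖ * h s) hab (hY v) (hh.const_mul _) (by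
    filter_upwards [hd] with s hs hm
    obtain ⟨w, hw, hwh⟩ := hs hm
    refine ⟨inner ℝ v w, ?_, ?_⟩
    · simpa using (hasDerivAt_const s v).inner ℝ hw
    · exact (real_inner_le_norm _ _).trans (by gcongr))
  rw [← inner_sub_right, ← hv, real_inner_self_eq_norm_sq, intervalIntegral.integral_const_mul]
    at h1
  have h2 : 0 ≤ ∫ s in a..b, h s := by
    apply intervalIntegral.integral_nonneg_of_ae_restrict hab
    filter_upwards [ae_restrict_of_ae hd, ae_restrict_mem measurableSet_Icc] with s hs hm
    obtain ⟨w, hw, hwh⟩ := hs hm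
    exact (norm_nonneg _).trans hwh
  by_contra hcon
  push Not at hcon
  nlinarith

lemma speed_bound {E : Type*} [NormedAddCommGroup E] [InnerProductSpace ℝ E]
    {t0 t1 L κ M δ N r C c : ℝ} {b e A : E}
    (hL : 0 ≤ L) (hκ : 0 ≤ κ) (hN : 0 ≤ N) (hNκ : 2 * N ≤ κ) (h01 : t0 ≤ t1) (hδ : 0 < δ)
    (hsm : (t1 - t0) * (L + κ) * (8 * M) ≤ δ) (hsm2 : 3 * (t1 - t0) * M ≤ 1)
    (hr : 0 < r) (hb1 : ‖b‖ ≤ r) (hb3 : r ≤ 3 * (t1 - t0) * M) (hen : ‖e‖ ≤ 1)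
    (hAs : ‖A‖ ≤ L) (hC1 : δ ≤ C)
    (hcy : C + inner ℝ A (r • e - b) - N * ‖r • e - b‖ ^ 2 ≤ c) :
    ‖(C - inner ℝ A b - κ * r + r * inner ℝ A e + κ * inner ℝ b e) • e‖ ≤ c := by
  have i1 : |inner ℝ A b| ≤ L * r :=
    (abs_real_inner_le_norm _ _).trans (by gcongr)
  have i2 : |inner ℝ A e| ≤ L * 1 :=
    (abs_real_inner_le_norm _ _).trans (by gcongr)
  have i3 : |inner ℝ b e| ≤ r * 1 :=
    (abs_real_inner_le_norm _ _).trans (by gcongr)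
  rw [abs_le] at i1 i2 i3
  have hn : ‖r • e - b‖ ^ 2 ≤ 2 * r * (r - inner ℝ b e) := by
    rw [norm_sub_sq_real, norm_smul, real_inner_smul_left, real_inner_comm b e,
      Real.norm_of_nonneg hr.le]
    have k1 : (r * ‖e‖) ^ 2 ≤ r ^ 2 := by
      gcongr; exact mul_le_of_le_one_right hr.le hen
    have k2 : ‖b‖ ^ 2 ≤ r ^ 2 := by gcongr
    linarith
  rw [inner_sub_right, real_inner_smul_right] at hcy
  have hN1 : N * ‖r • e - b‖ ^ 2 ≤ κ * (r - inner ℝ b e) := by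
    have q : 0 ≤ r - inner ℝ b e := by linarith [i3.2]
    have hr1' : r ≤ 1 := hb3.trans hsm2
    calc N * ‖r • e - b‖ ^ 2 ≤ N * (2 * r * (r - inner ℝ b e)) := by gcongr
      _ ≤ N * (2 * 1 * (r - inner ℝ b e)) := by gcongr
      _ = (2 * N) * (r - inner ℝ b e) := by ring
      _ ≤ _ := by gcongr
  have hσ0 : 0 ≤ C - inner ℝ A b - κ * r + r * inner ℝ A e + κ * inner ℝ b e := by
    have j1 : r * (-(L * 1)) ≤ r * inner ℝ A e := mul_le_mul_of_nonneg_left i2.1 hr.le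
    have j2 : κ * (-(r * 1)) ≤ κ * inner ℝ b e := mul_le_mul_of_nonneg_left i3.1 hκ
    have j3 : (L + κ) * r ≤ (L + κ) * (3 * (t1 - t0) * M) :=
      mul_le_mul_of_nonneg_left hb3 (by linarith)
    have j4 : (L + κ) * (3 * (t1 - t0) * M) ≤ 3 / 8 * δ := by linarith
    linarith [i1.2]
  rw [norm_smul, Real.norm_of_nonneg hσ0]
  refine (mul_le_of_le_one_right hσ0 hen).trans ?_
  linarith

set_option maxHeartbeats 1000000 in
lemma ball_path {t0 t1 L κ M δ N : ℝ} (h01 : t0 < t1) (hL : 0 ≤ L) (hLκ : L ≤ κ)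
    (hδ : 0 < δ) (hδM : δ ≤ M) (hN : 0 ≤ N) (hNκ : 2 * N ≤ κ)
    (hsm : (t1 - t0) * (L + κ) * (8 * M) ≤ δ) (hsm2 : 3 * (t1 - t0) * M ≤ 1)
    {X A : ℝ → E} {C : ℝ → ℝ} (hX : Continuous X)
    (hA : StronglyMeasurable A) (hAL : ∀ s, ‖A s‖ ≤ L)
    (hC1 : ∀ s, δ ≤ C s)
    {c : E → ℝ → ℝ}
    (hc : ∀ᵐ s, s ∈ Set.Icc t0 t1 → ∀ y,
      C s + inner ℝ (A s) (y - X s) - N * ‖y - X s‖ ^ 2 ≤ c y s)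
    (hint : ∀ Y : ℝ → E, Continuous Y → ∀ s1 s2, t0 ≤ s1 → s1 ≤ s2 → s2 ≤ t1 →
      IntervalIntegrable (fun s => c (Y s) s) volume s1 s2)
    {a : ℝ → E} {r : ℝ → ℝ} {Ka Kr : NNReal}
    (hal : LipschitzWith Ka a) (hrl : LipschitzWith Kr r)
    (ha0 : a t0 = X t0) (hr0 : r t0 = 0)
    (had : ∀ᵐ s, s ∈ Set.Icc t0 t1 → HasDerivAt a (r s • A s + κ • (X s - a s)) s)
    (hrd : ∀ᵐ s, s ∈ Set.Icc t0 t1 →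
        HasDerivAt r (C s - inner ℝ (A s) (X s - a s) - κ * r s) s)
    (hbr : ∀ s ∈ Set.Icc t0 t1, ‖X s - a s‖ ≤ r s ∧ δ / 2 * (s - t0) ≤ r s ∧
        r s ≤ 3 * (t1 - t0) * M)
    (y : E) (hy : ‖y - a t1‖ ≤ r t1) :
    ∃ Y : ℝ → E, Continuous Y ∧ Y t0 = X t0 ∧ Y t1 = y ∧
      ∀ s1 s2, t0 ≤ s1 → s1 ≤ s2 → s2 ≤ t1 → ‖Y s2 - Y s1‖ ≤ ∫ s in s1..s2, c (Y s) s := by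
  have : CompleteSpace E := FiniteDimensional.complete ℝ E
  have hM : 0 < M := hδ.trans_le hδM
  have hκ : 0 ≤ κ := hL.trans hLκ
  have hhK : (t1 - t0) * (L + κ) ≤ 1 / 8 := by
    have : (t1 - t0) * (L + κ) * (8 * M) ≤ (1 / 8) * (8 * M) := by linarith
    exact le_of_mul_le_mul_right this (by linarith)
  have hrpos : ∀ s ∈ Set.Icc t0 t1, s ≠ t0 → 0 < r s := by
    intro s hs hne
    have h1 : 0 < s - t0 := sub_pos.2 (lt_of_le_of_ne hs.1 (Ne.symm hne))
    have h2 : 0 < δ / 2 * (s - t0) := by positivity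
    linarith [(hbr s hs).2.1]
  have hr1 : 0 < r t1 := hrpos t1 ⟨h01.le, le_refl _⟩ h01.ne'
  have hrnn : ∀ s ∈ Set.Icc t0 t1, 0 ≤ r s := fun s hs =>
    (norm_nonneg _).trans (hbr s hs).1
  set e1 : E := (r t1)⁻¹ • (y - a t1) with he1
  have he1n : ‖e1‖ ≤ 1 := by
    rw [he1, norm_smul, norm_inv, Real.norm_of_nonneg hr1.le, inv_mul_le_iff₀ hr1]
    linarith
  let G : ℝ → E := fun s => A s + (κ * (r s)⁻¹) • (X s - a s)
  have hGm : StronglyMeasurable G := by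
    have h1 : StronglyMeasurable (fun s => (r s)⁻¹) :=
      (hrl.continuous.measurable.inv).stronglyMeasurable
    exact hA.add ((h1.const_mul κ).smul
      (hX.sub hal.continuous).stronglyMeasurable)
  have hGb : ∀ s ∈ Set.Icc t0 t1, ‖G s‖ ≤ L + κ := by
    intro s hs
    refine (norm_add_le _ _).trans (add_le_add (hAL s) ?_)
    rw [norm_smul, norm_mul, norm_inv, Real.norm_of_nonneg hκ, Real.norm_of_nonneg (hrnn s hs),
      mul_assoc]
    have h1 : (r s)⁻¹ * ‖X s - a s‖ ≤ 1 := by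
      rw [inv_mul_eq_div]
      exact div_le_one_of_le₀ (hbr s hs).1 (hrnn s hs)
    exact mul_le_of_le_one_right hκ h1
  let F : ℝ → E × ℝ → E × ℝ := fun s u => (-(u.2 • G s), -inner ℝ (G s) u.1)
  have hu0n : ‖((e1, 1) : E × ℝ)‖ = 1 := by
    rw [Prod.norm_def]; simpa using he1n
  obtain ⟨u, ⟨Cu, hCu⟩, hu1, hub, hub2, hud⟩ := picard (s0 := t1) (B := 0) (K := L + κ)
    F ((e1, 1) : E × ℝ) h01.le
    (by linarith) le_rfl
    (by
      intro u hu
      have hu1 : StronglyMeasurable (fun s => (u s).1) := (continuous_fst.comp hu).stronglyMeasurable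
      have hu2 : StronglyMeasurable (fun s => (u s).2) := (continuous_snd.comp hu).stronglyMeasurable
      refine (StronglyMeasurable.prodMk ?_ ?_).aestronglyMeasurable
      · exact (hu2.smul hGm).neg
      · exact (hGm.inner hu1).neg)
    (by
      intro s hs u v
      have h1 : ‖(u - v).1‖ ≤ ‖u - v‖ := norm_fst_le _
      have h2 : ‖(u - v).2‖ ≤ ‖u - v‖ := norm_snd_le _
      have hG' := hGb s hs
      have hLκ0 : 0 ≤ L + κ := by linarith
      rw [Prod.norm_def (F s u - F s v)]
      apply max_le
      · have e : (F s u - F s v).1 = -((u - v).2 • G s) := by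
          simp only [F, Prod.fst_sub, Prod.snd_sub]; module
        rw [e, norm_neg, norm_smul, mul_comm]
        gcongr
      · have e : (F s u - F s v).2 = -inner ℝ (G s) ((u - v).1) := by
          simp only [F, Prod.fst_sub, Prod.snd_sub, inner_sub_right]; ring
        rw [e, norm_neg]
        exact (norm_inner_le_norm _ _).trans (by gcongr))
    (by
      intro s hs
      simp [F])
    (by linarith)
  rw [hu0n] at hub hub2
  set P : ℝ → E := fun s => (u s).1 with hP
  set m : ℝ → ℝ := fun s => (u s).2 with hm
  have hPl : LipschitzWith Cu P := by
    have h1 : LipschitzWith (1 * Cu) (fun s => (u s).1) := LipschitzWith.prod_fst.comp hCu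
    simpa using h1
  have hml : LipschitzWith Cu m := by
    have h1 : LipschitzWith (1 * Cu) (fun s => (u s).2) := LipschitzWith.prod_snd.comp hCu
    simpa using h1
  have hP1 : P t1 = e1 := by simp [hP, hu1]
  have hm1 : m t1 = 1 := by simp [hm, hu1]
  have hmlow : ∀ s, 3 / 4 ≤ m s := by
    intro s
    have h1 := hub2 s
    have h2 : ‖(u s - (e1, 1)).2‖ ≤ ‖u s - (e1, 1)‖ := norm_snd_le _
    simp only [Prod.snd_sub, Real.norm_eq_abs] at h2
    have h3 := neg_abs_le (m s - 1)
    simp only [hm] at *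
    nlinarith
  have hPd : ∀ᵐ s, s ∈ Set.Icc t0 t1 → HasDerivAt P (-(m s • G s)) s := by
    filter_upwards [hud] with s hs hm
    exact (hs hm).fst
  have hmd : ∀ᵐ s, s ∈ Set.Icc t0 t1 → HasDerivAt m (-inner ℝ (G s) (P s)) s := by
    filter_upwards [hud] with s hs hm
    exact (hs hm).snd
  have hcone : ∀ s ∈ Set.Icc t0 t1, ‖P s‖ ≤ m s := by
    intro s hs
    have hnl : LipschitzWith (1 * Cu) (fun s => ‖P s‖) := lipschitzWith_one_norm.comp hPl
    have acm : AbsolutelyContinuousOnInterval m s t1 :=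
      hml.lipschitzOnWith.absolutelyContinuousOnInterval
    have acn : AbsolutelyContinuousOnInterval (fun s => ‖P s‖) s t1 :=
      hnl.lipschitzOnWith.absolutelyContinuousOnInterval
    have hac := (acm.mul acm).sub (acn.mul acn)
    have h1 := ftc_le (h := fun _ => 0) hs.2 hac (by simp) (by
      filter_upwards [hPd, hmd] with σ h1 h2 hσ
      have hσ' : σ ∈ Set.Icc t0 t1 := ⟨hs.1.trans hσ.1, hσ.2⟩
      have h3 := ((h2 hσ').mul (h2 hσ')).sub (h1 hσ').norm_sq
      refine ⟨_, h3.congr_of_eventuallyEq (Filter.Eventually.of_forall fun τ => ?_), ?_⟩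
      · simp [sq]
      · rw [inner_neg_right, real_inner_smul_right, real_inner_comm (P σ) (G σ)]
        apply le_of_eq; ring)
    simp only [Pi.sub_apply, Pi.mul_apply, hP1, hm1, intervalIntegral.integral_zero] at h1
    have h2 : ‖P s‖ ^ 2 ≤ m s ^ 2 := by nlinarith [norm_nonneg e1]
    exact le_of_sq_le_sq h2 (by linarith [hmlow s])
  have hmil : LipschitzWith (2 * Cu) (fun s => (m s)⁻¹) := by
    apply LipschitzWith.of_dist_le_mul
    intro s s'
    have h1 := hml.dist_le_mul s s'
    have p1 := hmlow s
    have p2 := hmlow s'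
    rw [Real.dist_eq] at h1 ⊢
    have e : (m s)⁻¹ - (m s')⁻¹ = -(m s - m s') / (m s * m s') := by
      have : m s ≠ 0 := by linarith
      have : m s' ≠ 0 := by linarith
      field_simp; ring
    have hpos : 0 < m s * m s' := mul_pos (by linarith) (by linarith)
    rw [e, abs_div, abs_neg, abs_of_pos hpos, div_le_iff₀ hpos]
    push_cast
    have h4 : 1 / 2 ≤ m s * m s' := by nlinarith
    have h5 : 0 ≤ (Cu : ℝ) * dist s s' := by positivity
    nlinarith
  refine ⟨fun s => a s + (r s * (m s)⁻¹) • P s, ?_, ?_, ?_, ?_⟩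
  · exact hal.continuous.add ((hrl.continuous.mul hmil.continuous).smul hPl.continuous)
  · simp [hr0, ha0]
  · simp [hP1, hm1, he1, smul_smul, mul_inv_cancel₀ hr1.ne']
  intro s1 s2 hs1 hs12 hs2
  have hYc : Continuous (fun s => a s + (r s * (m s)⁻¹) • P s) :=
    hal.continuous.add ((hrl.continuous.mul hmil.continuous).smul hPl.continuous)
  refine norm_le_of_deriv (Y := fun s => a s + (r s * (m s)⁻¹) • P s) hs12 ?_
    (hint _ hYc s1 s2 hs1 hs12 hs2) ?_
  · intro v
    have l1 := ((innerSL ℝ v).lipschitz.comp hal)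
    have l2 := ((innerSL ℝ v).lipschitz.comp hPl)
    have ac1 : AbsolutelyContinuousOnInterval _ s1 s2 :=
      l1.lipschitzOnWith.absolutelyContinuousOnInterval
    have ac2 : AbsolutelyContinuousOnInterval _ s1 s2 :=
      l2.lipschitzOnWith.absolutelyContinuousOnInterval
    have ac3 : AbsolutelyContinuousOnInterval _ s1 s2 :=
      hrl.lipschitzOnWith.absolutelyContinuousOnInterval
    have ac4 : AbsolutelyContinuousOnInterval _ s1 s2 :=
      hmil.lipschitzOnWith.absolutelyContinuousOnInterval
    have := ac1.add ((ac3.mul ac4).mul ac2)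
    have e : (fun s => inner ℝ v (a s + (r s * (m s)⁻¹) • P s)) =
        (⇑((innerSL ℝ) v) ∘ a + (r * fun s => (m s)⁻¹) * ⇑((innerSL ℝ) v) ∘ P) := by
      funext s
      simp [inner_add_right, real_inner_smul_right]
    rw [e]
    exact this
  · have hne : ∀ᵐ s : ℝ, s ≠ t0 := by simp [ae_iff, measure_singleton]
    filter_upwards [had, hrd, hPd, hmd, hc, hne] with s d1 d2 d3 d4 hcs hsne hs
    have hs' : s ∈ Set.Icc t0 t1 := ⟨hs1.trans hs.1, hs.2.trans hs2⟩
    have hr := hrpos s hs' hsne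
    have hmp : 0 < m s := by linarith [hmlow s]
    obtain ⟨hb1, -, hb3⟩ := hbr s hs'
    have hd := (d1 hs').add ((((d2 hs').mul ((d4 hs').inv hmp.ne'))).smul (d3 hs'))
    refine ⟨_, hd, ?_⟩
    have hcy := hcs hs' (a s + (r s * (m s)⁻¹) • P s)
    simp only [Pi.mul_apply, Pi.inv_apply]
    have hPm := hcone s hs'
    set b := X s - a s with hb
    set e : E := (m s)⁻¹ • P s with he
    have hen : ‖e‖ ≤ 1 := by
      rw [he, norm_smul, norm_inv, Real.norm_of_nonneg hmp.le, inv_mul_le_iff₀ hmp]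
      linarith
    have hPe : P s = m s • e := by rw [he, smul_smul, mul_inv_cancel₀ hmp.ne', one_smul]
    have hAs := hAL s
    have hGs : G s = A s + (κ * (r s)⁻¹) • b := rfl
    have hYX : a s + (r s * (m s)⁻¹) • P s - X s = r s • e - b := by
      rw [he, hb]; module
    rw [hYX] at hcy
    have key := speed_bound hL hκ hN hNκ h01.le hδ hsm hsm2 hr hb1 hb3 hen hAs (hC1 s) hcy
    refine le_trans (le_of_eq ?_) key
    congr 1
    have ein : inner ℝ (G s) e = inner ℝ (A s) e + (κ * (r s)⁻¹) * inner ℝ b e := by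
      rw [hGs, inner_add_left, real_inner_smul_left]
    rw [hPe, real_inner_smul_right, ein, hGs]
    have hr' := hr.ne'
    have hm' := hmp.ne'
    match_scalars <;> field_simp <;> ring

end core

section main
variable {E : Type*} [NormedAddCommGroup E] [InnerProductSpace ℝ E] [FiniteDimensional ℝ E]
  [CompleteSpace E] [MeasurableSpace E] [BorelSpace E]

lemma grad_facts {E : Type*} [NormedAddCommGroup E] [InnerProductSpace ℝ E] [CompleteSpace E]
    {f : E → ℝ} {L N : ℝ} (hL : 0 ≤ L) (hN : 0 ≤ N) (hf : ContDiff ℝ 1 f)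
    (hlip : ∀ x y, |f x - f y| ≤ L * ‖x - y‖)
    (hgrad : ∀ x y, ‖gradient f x - gradient f y‖ ≤ N * ‖x - y‖) (x : E) :
    ‖gradient f x‖ ≤ L ∧ ∀ y, f x + inner ℝ (gradient f x) (y - x) - N * ‖y - x‖ ^ 2 ≤ f y := by
  have hd : Differentiable ℝ f := hf.differentiable (by norm_num)
  constructor
  · rw [gradient, LinearIsometryEquiv.norm_map]
    apply norm_fderiv_le_of_lip' ℝ hL
    exact Filter.Eventually.of_forall (fun y => by simpa [Real.norm_eq_abs] using hlip y x)
  · intro y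
    set w := y - x with hw
    have hφ : ∀ θ : ℝ, HasDerivAt (fun θ : ℝ => f (x + θ • w))
        (inner ℝ (gradient f (x + θ • w)) w) θ := by
      intro θ
      have h1 : HasDerivAt (fun θ : ℝ => x + θ • w) w θ := by
        simpa using ((hasDerivAt_id θ).smul_const w).const_add x
      have h2 := (hd (x + θ • w)).hasGradientAt.hasFDerivAt.comp_hasDerivAt θ h1
      exact h2.congr_deriv (by simp)
    obtain ⟨θ, hθ, hslope⟩ := exists_hasDerivAt_eq_slope (fun θ : ℝ => f (x + θ • w))
      (fun θ => inner ℝ (gradient f (x + θ • w)) w) (zero_lt_one)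
      (continuous_iff_continuousAt.2 (fun θ => (hφ θ).continuousAt)).continuousOn
      (fun θ _ => hφ θ)
    simp only [one_smul, zero_smul, add_zero, sub_zero, div_one] at hslope
    have hy : x + w = y := by rw [hw]; abel
    rw [hy] at hslope
    have h3 : inner ℝ (gradient f x - gradient f (x + θ • w)) w ≤ N * ‖w‖ ^ 2 := by
      refine (real_inner_le_norm _ _).trans ?_
      have h4 := hgrad x (x + θ • w)
      have h5 : ‖x - (x + θ • w)‖ ≤ ‖w‖ := by
        rw [sub_add_cancel_left, norm_neg, norm_smul, Real.norm_of_nonneg hθ.1.le]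
        exact mul_le_of_le_one_left (norm_nonneg _) hθ.2.le
      calc _ ≤ (N * ‖w‖) * ‖w‖ := by
            gcongr
            exact h4.trans (by gcongr)
        _ = _ := by ring
    rw [inner_sub_left] at h3
    linarith

lemma grad_meas {c : E → ℝ → ℝ} (hc : Measurable (Function.uncurry c)) {S : Set ℝ}
    (hd : ∀ᵐ s ∂(volume.restrict S), ContDiff ℝ 1 (fun x => c x s))
    {X : ℝ → E} (hX : Continuous X) :
    AEStronglyMeasurable (fun s => gradient (fun x => c x s) (X s)) (volume.restrict S) := by
  have hcomp : ∀ v : E, AEMeasurable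
      (fun s => inner ℝ v (gradient (fun x => c x s) (X s))) (volume.restrict S) := by
    intro v
    refine aemeasurable_of_tendsto_metrizable_ae Filter.atTop
      (f := fun (n : ℕ) s => (n : ℝ) • (c (X s + (n : ℝ)⁻¹ • v) s - c (X s) s)) ?_ ?_
    · intro n
      apply Measurable.aemeasurable
      have h1 : Measurable (fun s => c (X s + (n : ℝ)⁻¹ • v) s) :=
        hc.comp ((hX.add continuous_const).measurable.prodMk measurable_id)
      have h2 : Measurable (fun s => c (X s) s) :=
        hc.comp (hX.measurable.prodMk measurable_id)
      simpa only [smul_eq_mul, Pi.sub_apply] using (h1.sub h2).const_mul (n : ℝ)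
    · filter_upwards [hd] with s hs
      have h1 := (hs.differentiable (by norm_num) (X s)).hasGradientAt.hasFDerivAt
      have h2 := (h1.lim_real v).comp tendsto_natCast_atTop_atTop
      rw [real_inner_comm]
      simpa [Function.comp_def] using h2
  have e : (fun s => gradient (fun x => c x s) (X s)) = fun s =>
      ∑ i, (inner ℝ (stdOrthonormalBasis ℝ E i) (gradient (fun x => c x s) (X s))) •
        stdOrthonormalBasis ℝ E i := by
    funext s
    rw [OrthonormalBasis.sum_repr']
  rw [e]
  refine Finset.aestronglyMeasurable_fun_sum _ (fun i _ => ?_)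
  exact (hcomp _).aestronglyMeasurable.smul_const _

lemma c_integrable {c : E → ℝ → ℝ} (hc : Measurable (Function.uncurry c)) {T M : ℝ}
    (hb : ∀ᵐ s, s ∈ Set.Icc 0 T → ∀ x, |c x s| ≤ M) {Y : ℝ → E} (hY : Continuous Y)
    {s1 s2 : ℝ} (h1 : 0 ≤ s1) (h12 : s1 ≤ s2) (h2 : s2 ≤ T) :
    IntervalIntegrable (fun s => c (Y s) s) volume s1 s2 := by
  have hm : Measurable (fun s => c (Y s) s) := hc.comp (hY.measurable.prodMk measurable_id)
  refine (intervalIntegrable_const (c := M)).mono_fun' hm.aestronglyMeasurable ?_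
  filter_upwards [ae_restrict_of_ae hb, ae_restrict_mem measurableSet_uIoc] with s hs hmem
  rw [Set.uIoc_of_le h12] at hmem
  exact hs ⟨h1.trans hmem.1.le, hmem.2.trans h2⟩ _

lemma deriv_bound {E : Type*} [NormedAddCommGroup E] [InnerProductSpace ℝ E]
    [FiniteDimensional ℝ E] {X : ℝ → E} {K : NNReal} (hX : LipschitzWith K X) {g : ℝ → ℝ} {t : ℝ}
    (ht : 0 ≤ t)
    (hg : IntervalIntegrable g volume 0 t)
    (hXg : ∀ s1 s2, 0 ≤ s1 → s1 ≤ s2 → s2 ≤ t → ‖X s2 - X s1‖ ≤ ∫ s in s1..s2, g s) :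
    ∀ᵐ s, s ∈ Set.Icc 0 t → ∃ v, HasDerivAt X v s ∧ ‖v‖ ≤ g s := by
  have hne : ∀ᵐ s : ℝ, s ≠ t := by simp [ae_iff, measure_singleton]
  filter_upwards [hX.ae_differentiableAt_real, hg.ae_hasDerivAt_integral, hne] with s h1 h2 h3 hs
  refine ⟨_, h1.hasDerivAt, ?_⟩
  rw [Set.uIcc_of_le ht] at h2
  have hG := h2 hs 0 ⟨le_rfl, ht⟩
  have hst : s < t := lt_of_le_of_ne hs.2 h3
  have hsub : Set.Ioi s ⊆ {s}ᶜ := fun y hy => ne_of_gt hy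
  have t1 := (h1.hasDerivAt.tendsto_slope.mono_left
    (nhdsWithin_mono s hsub)).norm
  have t2 := hG.tendsto_slope.mono_left
    (nhdsWithin_mono s hsub)
  refine le_of_tendsto_of_tendsto t1 t2 ?_
  filter_upwards [Ioo_mem_nhdsGT hst] with σ hσ
  have hpos : 0 < σ - s := sub_pos.2 hσ.1
  rw [slope_def_module, slope_def_field, norm_smul, norm_inv, Real.norm_of_nonneg hpos.le,
    inv_mul_eq_div]
  gcongr
  rw [intervalIntegral.integral_interval_sub_left]
  · exact hXg s σ hs.1 hσ.1.le hσ.2.le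
  · apply hg.mono_set
    rw [Set.uIcc_of_le ht, Set.uIcc_of_le (hs.1.trans hσ.1.le)]
    exact Set.Icc_subset_Icc_right hσ.2.le
  · apply hg.mono_set
    rw [Set.uIcc_of_le ht, Set.uIcc_of_le hs.1]
    exact Set.Icc_subset_Icc_right hs.2

lemma main_aux {T L N M δ κ t0 t : ℝ} (hL : 0 ≤ L) (hN : 0 ≤ N)
    (hδ : 0 < δ) (hδM : δ ≤ M) (hLκ : L ≤ κ) (hNκ : 2 * N ≤ κ)
    (ht0 : 0 ≤ t0) (ht0t : t0 < t) (htT : t ≤ T)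
    (hsm : (t - t0) * (L + κ) * (8 * M) ≤ δ) (hsm2 : 3 * (t - t0) * M ≤ 1)
    {c : E → ℝ → ℝ} (hcm : Measurable (Function.uncurry c))
    (hc : ∀ᵐ t ∂(volume.restrict (Set.Icc 0 T)),
        ContDiff ℝ 1 (fun x => c x t) ∧
        ∀ x y : E,
          |c x t - c y t| ≤ L * ‖x - y‖ ∧
          ‖gradient (fun z => c z t) x - gradient (fun z => c z t) y‖ ≤ N * ‖x - y‖ ∧
          δ ≤ c x t ∧ c x t ≤ M)
    {x : ℝ → E} (hx : ∀ s₁ s₂ : ℝ, 0 ≤ s₁ → s₁ ≤ s₂ → s₂ ≤ t →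
            ‖x s₂ - x s₁‖ ≤ ∫ s in s₁..s₂, c (x s) s) :
    ∃ (a : E) (r : ℝ), ‖x t - a‖ ≤ r ∧ δ / 2 * (t - t0) ≤ r ∧
      ∀ y, ‖y - a‖ ≤ r → ∃ W : ℝ → E, W 0 = x 0 ∧ W t = y ∧
        ∀ s₁ s₂ : ℝ, 0 ≤ s₁ → s₁ ≤ s₂ → s₂ ≤ t →
            ‖W s₂ - W s₁‖ ≤ ∫ s in s₁..s₂, c (W s) s := by
  have hM : 0 < M := hδ.trans_le hδM
  have ht : 0 < t := ht0.trans_lt ht0t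
  rw [ae_restrict_iff' measurableSet_Icc] at hc
  have hb : ∀ᵐ s, s ∈ Set.Icc 0 T → ∀ x, |c x s| ≤ M := by
    filter_upwards [hc] with s hs hm y
    have := ((hs hm).2 y y).2.2
    rw [abs_le]; constructor <;> linarith
  have hxl : ∀ s₁ s₂ : ℝ, 0 ≤ s₁ → s₁ ≤ s₂ → s₂ ≤ t → ‖x s₂ - x s₁‖ ≤ M * (s₂ - s₁) := by
    intro s₁ s₂ h1 h12 h2
    refine (hx s₁ s₂ h1 h12 h2).trans ((le_abs_self _).trans ?_)
    rw [← Real.norm_eq_abs]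
    have := intervalIntegral.norm_integral_le_of_norm_le_const_ae (a := s₁) (b := s₂)
      (f := fun s => c (x s) s) (C := M) (by
        filter_upwards [hb] with s hs hm
        rw [Set.uIoc_of_le h12] at hm
        exact hs ⟨h1.trans hm.1.le, hm.2.trans (h2.trans htT)⟩ _)
    rwa [abs_of_nonneg (by linarith)] at this
  -- clamped path
  let X : ℝ → E := fun s => x (max 0 (min s t))
  have hXx : ∀ s ∈ Set.Icc 0 t, X s = x s := by
    intro s hs
    simp only [X]
    rw [min_eq_left hs.2, max_eq_right hs.1]
  have hXl : LipschitzWith M.toNNReal X := by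
    apply LipschitzWith.of_dist_le_mul
    rw [Real.coe_toNNReal _ hM.le]
    have key : ∀ s s' : ℝ, s ≤ s' → dist (X s) (X s') ≤ M * dist s s' := by
      intro s s' hss
      rw [dist_comm, dist_eq_norm, dist_comm, Real.dist_eq, abs_of_nonneg (by linarith)]
      refine (hxl _ _ (le_max_left _ _) (by gcongr) (max_le ht.le (min_le_right _ _))).trans ?_
      refine mul_le_mul_of_nonneg_left ?_ hM.le
      simp only [max_def, min_def]
      split_ifs <;> linarith
    intro s s'
    rcases le_total s s' with h | h
    · exact key s s' h
    · rw [dist_comm (X s), dist_comm s]; exact key s' s h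
  have hXint : ∀ s₁ s₂ : ℝ, 0 ≤ s₁ → s₁ ≤ s₂ → s₂ ≤ t →
      ∫ s in s₁..s₂, c (X s) s = ∫ s in s₁..s₂, c (x s) s := by
    intro s₁ s₂ h1 h12 h2
    apply intervalIntegral.integral_congr
    intro s hs
    rw [Set.uIcc_of_le h12] at hs
    simp only
    rw [hXx s ⟨h1.trans hs.1, hs.2.trans h2⟩]
  have hXc : Continuous X := hXl.continuous
  have hXC0 := deriv_bound hXl ht.le (c_integrable hcm hb hXc le_rfl ht.le htT) (by
    intro s₁ s₂ h1 h12 h2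
    rw [hXint s₁ s₂ h1 h12 h2, hXx s₁ ⟨h1, h12.trans h2⟩, hXx s₂ ⟨h1.trans h12, h2⟩]
    exact hx s₁ s₂ h1 h12 h2)
  -- speed
  let C : ℝ → ℝ := fun s => max δ (min M (c (X s) s))
  have hCm : Measurable C :=
    measurable_const.max (measurable_const.min (hcm.comp (hXc.measurable.prodMk measurable_id)))
  have hCe : ∀ᵐ s, s ∈ Set.Icc 0 T → C s = c (X s) s := by
    filter_upwards [hc] with s hs hm
    have := ((hs hm).2 (X s) (X s)).2.2
    simp only [C]
    rw [min_eq_right this.2, max_eq_right this.1]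
  -- gradient
  have hgm := grad_meas (S := Set.Icc 0 T) hcm (by
    rw [ae_restrict_iff' measurableSet_Icc]
    filter_upwards [hc] with s hs hm using (hs hm).1) hXc
  let A0 : ℝ → E := hgm.mk _
  have hA0m : StronglyMeasurable A0 := hgm.stronglyMeasurable_mk
  have hA0e := hgm.ae_eq_mk
  rw [Filter.EventuallyEq, ae_restrict_iff' measurableSet_Icc] at hA0e
  let A : ℝ → E := Set.indicator {s | ‖A0 s‖ ≤ L} A0
  have hAm : StronglyMeasurable A :=
    hA0m.indicator (measurableSet_le hA0m.norm.measurable measurable_const)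
  have hAL : ∀ s, ‖A s‖ ≤ L := by
    intro s
    by_cases hs : s ∈ {s | ‖A0 s‖ ≤ L}
    · simp only [A, Set.indicator_of_mem hs]; exact hs
    · simp only [A, Set.indicator_of_notMem hs, norm_zero]; exact hL
  have hlow : ∀ᵐ s, s ∈ Set.Icc t0 t → ∀ y,
      C s + inner ℝ (A s) (y - X s) - N * ‖y - X s‖ ^ 2 ≤ c y s := by
    filter_upwards [hc, hCe, hA0e] with s h1 h2 h3 hm y
    have hm' : s ∈ Set.Icc 0 T := ⟨ht0.trans hm.1, hm.2.trans htT⟩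
    obtain ⟨g1, g2⟩ := grad_facts hL hN (h1 hm').1 (fun x y => ((h1 hm').2 x y).1)
      (fun x y => ((h1 hm').2 x y).2.1) (X s)
    have hA0s : A0 s = gradient (fun x => c x s) (X s) := (h3 hm').symm
    have hAs : A s = gradient (fun x => c x s) (X s) := by
      have : s ∈ {s | ‖A0 s‖ ≤ L} := by
        simp only [Set.mem_setOf_eq, hA0s]; exact g1
      simp only [A, Set.indicator_of_mem this, hA0s]
    rw [hAs, h2 hm']
    exact g2 y
  have hXC : ∀ᵐ s, s ∈ Set.Icc t0 t → ∃ v, HasDerivAt X v s ∧ ‖v‖ ≤ C s := by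
    filter_upwards [hXC0, hCe] with s h1 h2 hm
    rw [h2 ⟨ht0.trans hm.1, hm.2.trans htT⟩]
    exact h1 ⟨ht0.trans hm.1, hm.2⟩
  obtain ⟨a, r, ⟨Ka, hal⟩, ⟨Kr, hrl⟩, ha0, hr0, had, hrd, hbr⟩ :=
    moving_ball ht0t.le hL hLκ hδ hδM (Real.coe_toNNReal _ hM.le) hsm hXl hAm hAL hCm
      (fun s => le_max_left _ _) (fun s => max_le hδM (min_le_left _ _)) hXC
  have hbt := hbr t ⟨ht0t.le, le_rfl⟩
  refine ⟨a t, r t, ?_, hbt.2.1, ?_⟩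
  · rw [← hXx t ⟨ht.le, le_rfl⟩]; exact hbt.1
  intro y hy
  obtain ⟨Y, hYc, hY0, hY1, hYp⟩ := ball_path ht0t hL hLκ hδ hδM hN hNκ hsm hsm2 hXc hAm hAL
    (fun s => le_max_left _ _) hlow
    (fun Y hY s1 s2 h1 h12 h2 => c_integrable hcm hb hY (ht0.trans h1) h12 (h2.trans htT))
    hal hrl ha0 hr0 had hrd hbr y hy
  let W : ℝ → E := fun s => if s ≤ t0 then X s else Y s
  have hWX : ∀ s, s ≤ t0 → W s = X s := fun s hs => by simp only [W, if_pos hs]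
  have hWY : ∀ s, t0 ≤ s → W s = Y s := by
    intro s hs
    rcases hs.eq_or_lt with h | h
    · rw [← h, hWX t0 le_rfl, hY0]
    · simp only [W, if_neg (not_le.2 h)]
  have hWc : Continuous W := by
    apply Continuous.if_le hXc hYc continuous_id continuous_const
    intro s hs
    simp only [id] at hs
    rw [hs, hY0]
  have p1 : ∀ s₁ s₂ : ℝ, 0 ≤ s₁ → s₁ ≤ s₂ → s₂ ≤ t0 →
      ‖W s₂ - W s₁‖ ≤ ∫ s in s₁..s₂, c (W s) s := by
    intro s₁ s₂ h1 h12 h2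
    have e : ∫ s in s₁..s₂, c (W s) s = ∫ s in s₁..s₂, c (X s) s := by
      apply intervalIntegral.integral_congr
      intro s hs
      rw [Set.uIcc_of_le h12] at hs
      simp only
      rw [hWX s (hs.2.trans h2)]
    rw [e, hXint s₁ s₂ h1 h12 (h2.trans ht0t.le), hWX s₂ h2, hWX s₁ (h12.trans h2),
      hXx s₁ ⟨h1, h12.trans (h2.trans ht0t.le)⟩, hXx s₂ ⟨h1.trans h12, h2.trans ht0t.le⟩]
    exact hx s₁ s₂ h1 h12 (h2.trans ht0t.le)
  have p2 : ∀ s₁ s₂ : ℝ, t0 ≤ s₁ → s₁ ≤ s₂ → s₂ ≤ t →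
      ‖W s₂ - W s₁‖ ≤ ∫ s in s₁..s₂, c (W s) s := by
    intro s₁ s₂ h1 h12 h2
    have e : ∫ s in s₁..s₂, c (W s) s = ∫ s in s₁..s₂, c (Y s) s := by
      apply intervalIntegral.integral_congr
      intro s hs
      rw [Set.uIcc_of_le h12] at hs
      simp only
      rw [hWY s (h1.trans hs.1)]
    rw [e, hWY s₂ (h1.trans h12), hWY s₁ h1]
    exact hYp s₁ s₂ h1 h12 h2
  refine ⟨W, ?_, ?_, ?_⟩
  · rw [hWX 0 ht0, hXx 0 ⟨le_rfl, ht.le⟩]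
  · rw [hWY t ht0t.le, hY1]
  · intro s₁ s₂ h1 h12 h2
    rcases le_total s₂ t0 with h | h
    · exact p1 s₁ s₂ h1 h12 h
    · rcases le_total t0 s₁ with h' | h'
      · exact p2 s₁ s₂ h' h12 h2
      · have i1 := c_integrable hcm hb hWc h1 h' (ht0t.le.trans htT)
        have i2 := c_integrable hcm hb hWc ht0 h (h2.trans htT)
        rw [← intervalIntegral.integral_add_adjacent_intervals i1 i2]
        have e : W s₂ - W s₁ = (W t0 - W s₁) + (W s₂ - W t0) := by abel
        rw [e]
        exact (norm_add_le _ _).trans (add_le_add (p1 s₁ t0 h1 h' le_rfl) (p2 t0 s₂ le_rfl h h2))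

end main

lemma inner_sub_ball_aux {E : Type*} [NormedAddCommGroup E] [NormedSpace ℝ E] [Nontrivial E] {z a : E}
    {r ρ : ℝ} (hρ : 0 < ρ) (hr : 2 * ρ ≤ r) (hz : ‖z - a‖ ≤ r) :
    ∃ p : E, p ≠ 0 ∧ ∀ y ∈ Metric.closedBall (z - (ρ / ‖p‖) • p) ρ, ‖y - a‖ ≤ r := by
  have main : ∀ p : E, p ≠ 0 → ‖z - (ρ / ‖p‖) • p - a‖ ≤ r - ρ →
      ∀ y ∈ Metric.closedBall (z - (ρ / ‖p‖) • p) ρ, ‖y - a‖ ≤ r := by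
    intro p _ hp y hy
    rw [mem_closedBall_iff_norm] at hy
    have e : y - a = (y - (z - (ρ / ‖p‖) • p)) + (z - (ρ / ‖p‖) • p - a) := by abel
    rw [e]
    refine (norm_add_le _ _).trans ?_
    linarith
  by_cases h : z - a = 0
  · obtain ⟨p, hp⟩ := exists_ne (0 : E)
    refine ⟨p, hp, main p hp ?_⟩
    have hp' : ‖p‖ ≠ 0 := norm_ne_zero_iff.2 hp
    have e : z - (ρ / ‖p‖) • p - a = -((ρ / ‖p‖) • p) := by
      rw [sub_right_comm, h, zero_sub]
    rw [e, norm_neg, norm_smul, norm_div, norm_norm, div_mul_cancel₀ _ hp',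
      Real.norm_of_nonneg hρ.le]
    linarith
  · refine ⟨z - a, h, main _ h ?_⟩
    have hp' : ‖z - a‖ ≠ 0 := norm_ne_zero_iff.2 h
    have e : z - (ρ / ‖z - a‖) • (z - a) - a = (1 - ρ / ‖z - a‖) • (z - a) := by module
    rw [e, norm_smul, Real.norm_eq_abs, ← abs_of_nonneg (norm_nonneg (z - a)), ← abs_mul,
      abs_of_nonneg (norm_nonneg (z - a)), sub_mul, div_mul_cancel₀ _ hp', one_mul, abs_le]
    constructor <;> linarith [norm_nonneg (z - a)]

/-- Interior ball regularization of reachable sets. Given constants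
`T > 0`, `L₁, N₁ ≥ 0`, `0 < δ ≤ M₁`, there exists `γ > 0` depending only on these
constants such that: for any dimension `N ≥ 1`, any Borel measurable velocity
`c : ℝ^N × [0,T] → ℝ` which for a.e. `t` is `C¹` in `x` with
`|c(x,t) − c(y,t)| ≤ L₁|x−y|`, `|D_x c(x,t) − D_x c(y,t)| ≤ N₁|x−y|` and
`δ ≤ c ≤ M₁`, and any nonempty closed initial set `K₀ ⊆ ℝ^N`, the reachable set
`ℛ(t)` (endpoints at time `t` of absolutely continuous trajectories starting from
`K₀` with speed at most `c`, encoded by the equivalent metric condition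
`‖x(s₂) − x(s₁)‖ ≤ ∫_{s₁}^{s₂} c(x(s), s) ds`) has, for every `t ∈ (0,T]`, the
interior ball property of radius `γ t`: every `z ∈ ℛ(t)` admits `p ≠ 0` with
`B̄(z − γt p/|p|, γt) ⊆ ℛ(t)`. -/
theorem stmt_14 (T L₁ N₁ M₁ δ : ℝ)
    (hT : 0 < T) (hL₁ : 0 ≤ L₁) (hN₁ : 0 ≤ N₁) (hδ : 0 < δ) (hδM : δ ≤ M₁) :
    ∃ γ : ℝ, 0 < γ ∧
      ∀ (N : ℕ), 1 ≤ N →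
      ∀ (c : EuclideanSpace ℝ (Fin N) → ℝ → ℝ),
      Measurable (Function.uncurry c) →
      (∀ᵐ t ∂(volume.restrict (Set.Icc 0 T)),
        ContDiff ℝ 1 (fun x => c x t) ∧
        ∀ x y : EuclideanSpace ℝ (Fin N),
          |c x t - c y t| ≤ L₁ * ‖x - y‖ ∧
          ‖gradient (fun z => c z t) x - gradient (fun z => c z t) y‖ ≤ N₁ * ‖x - y‖ ∧
          δ ≤ c x t ∧ c x t ≤ M₁) →
      ∀ (K₀ : Set (EuclideanSpace ℝ (Fin N))), K₀.Nonempty → IsClosed K₀ →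
      ∀ (R : ℝ → Set (EuclideanSpace ℝ (Fin N))),
      (∀ t : ℝ, R t = {z : EuclideanSpace ℝ (Fin N) |
        ∃ x : ℝ → EuclideanSpace ℝ (Fin N), x 0 ∈ K₀ ∧ x t = z ∧
          ∀ s₁ s₂ : ℝ, 0 ≤ s₁ → s₁ ≤ s₂ → s₂ ≤ t →
            ‖x s₂ - x s₁‖ ≤ ∫ s in s₁..s₂, c (x s) s}) →
      ∀ t : ℝ, 0 < t → t ≤ T →
        ∀ z ∈ R t, ∃ p : EuclideanSpace ℝ (Fin N), p ≠ 0 ∧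
          Metric.closedBall (z - ((γ * t) / ‖p‖) • p) (γ * t) ⊆ R t := by
  have hM : 0 < M₁ := hδ.trans_le hδM
  set κ : ℝ := L₁ + 2 * N₁ + 1 with hκ
  have hκ0 : 0 < κ := by positivity
  have hLκ : 0 < L₁ + κ := by positivity
  set τ : ℝ := min (δ / ((L₁ + κ) * (8 * M₁))) (1 / (3 * M₁)) with hτ
  have hτ0 : 0 < τ := lt_min (by positivity) (by positivity)
  have hτ1 : τ * (L₁ + κ) * (8 * M₁) ≤ δ := by
    have := min_le_left (δ / ((L₁ + κ) * (8 * M₁))) (1 / (3 * M₁))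
    rw [← hτ, le_div_iff₀ (by positivity)] at this
    linarith
  have hτ2 : 3 * τ * M₁ ≤ 1 := by
    have := min_le_right (δ / ((L₁ + κ) * (8 * M₁))) (1 / (3 * M₁))
    rw [← hτ, le_div_iff₀ (by positivity)] at this
    linarith
  have hmin : 0 < min 1 (τ / T) := lt_min one_pos (by positivity)
  refine ⟨δ / 4 * min 1 (τ / T), by positivity, ?_⟩
  intro N hN c hcm hc K₀ _ _ R hR t ht htT z hz
  have : Nonempty (Fin N) := ⟨⟨0, hN⟩⟩
  rw [hR t] at hz
  obtain ⟨x, hx0, hxt, hx⟩ := hz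
  set t0 : ℝ := max 0 (t - τ) with ht0
  have h1 : 0 ≤ t0 := le_max_left _ _
  have h2 : t0 < t := max_lt ht (by linarith)
  have h3 : t - t0 ≤ τ := by linarith [le_max_right 0 (t - τ)]
  have h4 : t * min 1 (τ / T) ≤ t - t0 := by
    rcases max_choice 0 (t - τ) with h | h
    · rw [ht0, h, sub_zero]
      exact mul_le_of_le_one_right ht.le (min_le_left _ _)
    · rw [ht0, h]
      calc t * min 1 (τ / T) ≤ T * (τ / T) := by
            gcongr
            exact min_le_right _ _
        _ = t - (t - τ) := by field_simp; ring
  obtain ⟨a, r, hza, hr, hball⟩ := main_aux (κ := κ) hL₁ hN₁ hδ hδM (by linarith) (by linarith)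
    h1 h2 htT
    (le_trans (by gcongr) hτ1) (le_trans (by gcongr) hτ2) hcm hc hx
  rw [hxt] at hza
  have hρ : 0 < δ / 4 * min 1 (τ / T) * t := by positivity
  have hρr : 2 * (δ / 4 * min 1 (τ / T) * t) ≤ r := by
    have := mul_le_mul_of_nonneg_left h4 (by linarith : 0 ≤ δ / 2)
    linarith
  obtain ⟨p, hp, hsub⟩ := inner_sub_ball_aux hρ hρr hza
  refine ⟨p, hp, fun y hy => ?_⟩
  obtain ⟨W, hW0, hWt, hW⟩ := hball y (hsub y hy)
  rw [hR t]
  exact ⟨W, by rw [hW0]; exact hx0, hWt, hW⟩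
end
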